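/- arXiv:2212.07974 — 2 statements merged into one kernel-verified Lean document; each statement's English description precedes it below -/
import Mathlib

section
/- Let α ∈ (0,1], let E_α(z) = ∑_{n=0}^∞ z^n / Γ(1 + αn) be the classical Mittag-Leffler function, and let L : (0,∞) → ℝ be a function satisfying E_α(L(x)) = x for all x ∈ (0,1] and L(E_α(z)) = z for all z ≤ 0 (so L is the inverse on (0,1] of the restriction of E_α to (-∞,0]). Then the function x ↦ − x · L(x) is concave on (0,1] if and only if α ≤ α_* or α = 1, where α_* ∈ (0,1) is the unique solution in (0,1) of 1/Γ(1-2a)² = 1/(Γ(1-a)·Γ(1-3a)). -/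
/-- The two-parameter Mittag-Leffler function `E_{α,β}(z) = ∑ z^n / Γ(β + αn)`;
the classical Mittag-Leffler function is `E_α = E_{α,1}`. -/
noncomputable def mittagLeffler (α β z : ℝ) : ℝ :=
  ∑' n : ℕ, z ^ n / Real.Gamma (β + α * n)


/-- Law of the number of tables in the Chinese restaurant process (shifted indices). -/
noncomputable def mlq (a : ℝ) : ℕ → ℕ → ℝ
  | 0, j => if j = 0 then 1 else 0
  | n + 1, j => (1 - a * (j + 1) / (n + 1)) * mlq a n j + (a * j / (n + 1)) * mlq a n (j - 1)

noncomputable def mlgp (z : ℝ) (n : ℕ) : ℝ := ∏ k ∈ Finset.range n, (1 + z / (k + 1))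

lemma mlq_succ (a : ℝ) (n j : ℕ) : mlq a (n + 1) j =
    (1 - a * (j + 1) / (n + 1)) * mlq a n j + (a * j / (n + 1)) * mlq a n (j - 1) := rfl

lemma mlgp_succ (z : ℝ) (n : ℕ) : mlgp z (n + 1) = mlgp z n * (1 + z / (n + 1)) := by
  simp [mlgp, Finset.prod_range_succ]

lemma mlq_support (a : ℝ) (n : ℕ) : ∀ j, n < j → mlq a n j = 0 := by
  induction n with
  | zero => intro j hj; simp [mlq]; omega
  | succ n ih =>
    intro j hj
    rw [mlq_succ, ih j (by omega), ih (j - 1) (by omega)]; ring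

lemma mlq_nonneg {a : ℝ} (h0 : 0 ≤ a) (h1 : a ≤ 1) (n : ℕ) : ∀ j, 0 ≤ mlq a n j := by
  induction n with
  | zero => intro j; simp only [mlq]; split_ifs <;> norm_num
  | succ n ih =>
    intro j
    rw [mlq_succ]
    have hn : (0 : ℝ) < n + 1 := by positivity
    refine add_nonneg ?_ (mul_nonneg (by positivity) (ih _))
    by_cases hj : j ≤ n
    · refine mul_nonneg ?_ (ih _)
      have : (j : ℝ) ≤ n := by exact_mod_cast hj
      rw [sub_nonneg, div_le_one hn]
      nlinarith
    · rw [mlq_support a n j (by omega)]; simp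

lemma mlq_pos {a : ℝ} (h0 : 0 < a) (h1 : a < 1) (n : ℕ) : ∀ j, j ≤ n → 0 < mlq a n j := by
  induction n with
  | zero => intro j hj; have hj0 : j = 0 := (by omega); subst hj0; simp [mlq]
  | succ n ih =>
    intro j hj
    rw [mlq_succ]
    have hn : (0 : ℝ) < n + 1 := by positivity
    by_cases hjn : j ≤ n
    · refine add_pos_of_pos_of_nonneg ?_ (mul_nonneg (by positivity) (mlq_nonneg h0.le h1.le _ _))
      refine mul_pos ?_ (ih _ hjn)
      have : (j : ℝ) ≤ n := by exact_mod_cast hjn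
      rw [sub_pos, div_lt_one hn]
      nlinarith
    · have : j = n + 1 := by omega
      subst this
      rw [mlq_support a n (n + 1) (by omega)]
      have := ih n le_rfl
      simp only [Nat.add_sub_cancel]
      push_cast
      rw [mul_zero, zero_add]
      positivity

lemma mlq_sum_succ (a : ℝ) (n : ℕ) (g : ℕ → ℝ) :
    ∑ j ∈ Finset.range (n + 2), mlq a (n + 1) j * g j =
    ∑ j ∈ Finset.range (n + 1), mlq a n j *
      ((1 - a * (j + 1) / (n + 1)) * g j + (a * (j + 1) / (n + 1)) * g (j + 1)) := by
  have e1 : ∑ j ∈ Finset.range (n + 2), mlq a (n + 1) j * g j =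
      ∑ j ∈ Finset.range (n + 2), mlq a n j * ((1 - a * (j + 1) / (n + 1)) * g j) +
      ∑ j ∈ Finset.range (n + 2), (a * j / (n + 1)) * mlq a n (j - 1) * g j := by
    rw [← Finset.sum_add_distrib]
    refine Finset.sum_congr rfl fun j _ => ?_
    rw [mlq_succ]; ring
  rw [e1, Finset.sum_range_succ, mlq_support a n (n + 1) (by omega),
    Finset.sum_range_succ' (fun j : ℕ => (a * j / (n + 1)) * mlq a n (j - 1) * g j)]
  simp only [Nat.add_sub_cancel, zero_mul, add_zero, Nat.cast_zero, mul_zero, zero_div]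
  rw [← Finset.sum_add_distrib]
  refine Finset.sum_congr rfl fun j _ => ?_
  push_cast; ring

lemma mlq_moment (a : ℝ) (m n : ℕ) :
    ∑ j ∈ Finset.range (n + 1), mlq a n j * ((j + m).choose m : ℝ) = mlgp (a * m) n := by
  induction n with
  | zero => simp [mlq, mlgp]
  | succ n ih =>
    rw [mlq_sum_succ, mlgp_succ, ← ih, Finset.sum_mul]
    refine Finset.sum_congr rfl fun j _ => ?_
    have h : ((j : ℝ) + 1) * ((j + 1 + m).choose m : ℝ) = (j + 1 + m) * ((j + m).choose m : ℝ) := by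
      have h1 := Nat.add_one_mul_choose_eq (j + m) j
      have h2 : (j + m).choose j = (j + m).choose m := Nat.choose_symm_add
      have h3 : (j + m + 1).choose (j + 1) = (j + 1 + m).choose m := by
        rw [show j + m + 1 = (j + 1) + m by ring]; exact Nat.choose_symm_add
      rw [h2, h3] at h1
      have h4 : ((j + m + 1 : ℕ) : ℝ) * ((j + m).choose m : ℝ) = ((j + 1 + m).choose m : ℝ) * ((j + 1 : ℕ) : ℝ) := by
        exact_mod_cast h1
      push_cast at h4
      linarith
    have hn : (n : ℝ) + 1 ≠ 0 := by positivity
    field_simp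
    linear_combination (mlq a n j * a) * h

lemma mlq_eq_sum (a : ℝ) (n : ℕ) : ∀ j, mlq a n j =
    ∑ i ∈ Finset.range (j + 1), (j.choose i : ℝ) * (-1) ^ i * mlgp (-(a * (i + 1))) n := by
  induction n with
  | zero =>
    intro j
    simp only [mlgp, Finset.range_zero, Finset.prod_empty, mul_one]
    have := Int.alternating_sum_range_choose (n := j)
    have h2 : ∑ i ∈ Finset.range (j + 1), (j.choose i : ℝ) * (-1) ^ i = (if j = 0 then 1 else 0) := by
      have := congrArg (fun z : ℤ => (z : ℝ)) this
      push_cast at this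
      rw [← this]
      exact Finset.sum_congr rfl fun i _ => by ring
    rw [h2]; simp [mlq]
  | succ n ih =>
    intro j
    rw [mlq_succ]
    have hn : (n : ℝ) + 1 ≠ 0 := by positivity
    cases j with
    | zero =>
      rw [ih]
      simp [mlgp_succ]; ring
    | succ j =>
      rw [ih (j + 1), Nat.add_sub_cancel, ih j]
      have e : ∑ i ∈ Finset.range (j + 1), (j.choose i : ℝ) * (-1) ^ i * mlgp (-(a * (i + 1))) n =
        ∑ i ∈ Finset.range (j + 2), (j.choose i : ℝ) * (-1) ^ i * mlgp (-(a * (i + 1))) n := by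
        rw [Finset.sum_range_succ _ (j + 1)]; simp
      rw [e, Finset.mul_sum, Finset.mul_sum, ← Finset.sum_add_distrib]
      refine Finset.sum_congr rfl fun i hi => ?_
      have hi' : i ≤ j + 1 := by simpa [Nat.lt_succ_iff] using hi
      have h : ((j : ℝ) + 1) * (j.choose i : ℝ) = (j + 1 - i) * ((j + 1).choose i : ℝ) := by
        have h1 := Nat.choose_mul_succ_eq j i
        have h2 : (((j + 1 - i : ℕ)) : ℝ) = (j : ℝ) + 1 - i := by
          rw [Nat.cast_sub hi']; push_cast; ring
        rw [← h2]
        have : ((j.choose i * (j + 1) : ℕ) : ℝ) = (((j + 1).choose i * (j + 1 - i) : ℕ) : ℝ) := by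
          exact_mod_cast h1
        push_cast at this ⊢
        rw [mul_comm, this]; 
        push_cast [Nat.cast_sub hi']; ring
      rw [mlgp_succ]
      push_cast
      field_simp
      linear_combination (a * mlgp (-(a * (i + 1))) n) * h

/-- iterated differences -/
noncomputable def mld (a : ℝ) : ℕ → ℕ → ℕ → ℝ
  | 0, n, j => mlq a n j
  | m + 1, n, j => mld a m n j - mld a m n (j + 1)

lemma mld_rec (a : ℝ) (m n : ℕ) : ∀ j, mld a m (n + 1) j =
    (1 - a * (j + 1 + m) / (n + 1)) * mld a m n j + (a * j / (n + 1)) * mld a m n (j - 1) := by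
  induction m with
  | zero => intro j; simp only [mld]; rw [mlq_succ]; simp
  | succ m ih =>
    intro j
    have hn : (n : ℝ) + 1 ≠ 0 := by positivity
    simp only [mld]
    rw [ih j, ih (j + 1), Nat.add_sub_cancel]
    cases j with
    | zero => push_cast; field_simp; simp; ring
    | succ j => simp only [Nat.add_sub_cancel]; push_cast; field_simp; ring

lemma mld_support (a : ℝ) (m n : ℕ) : ∀ j, n < j → mld a m n j = 0 := by
  induction m with
  | zero => intro j hj; exact mlq_support a n j hj
  | succ m ih => intro j hj; simp only [mld]; rw [ih j hj, ih (j + 1) (by omega)]; ring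

lemma mld_bound {a : ℝ} (h0 : 1 / 2 < a) (h1 : a < 1) :
    ∃ C : ℝ, 0 ≤ C ∧ ∃ n0 : ℕ, 1 ≤ n0 ∧ ∀ n, n0 ≤ n → ∀ j, |mld a 3 n j| ≤ C * (n : ℝ) ^ (-(4 * a)) := by
  obtain ⟨n0, hn0⟩ := exists_nat_gt (4 / (1 - a))
  have hpos : 0 < 1 - a := by linarith
  have hn1 : 1 ≤ n0 := by
    have : (0 : ℝ) < n0 := lt_trans (by positivity) hn0
    exact_mod_cast this
  have hn0' : (0 : ℝ) < n0 := by exact_mod_cast hn1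
  set S := ∑ j ∈ Finset.range (n0 + 1), |mld a 3 n0 j| with hS
  refine ⟨S * (n0 : ℝ) ^ (4 * a), by positivity, n0, hn1, ?_⟩
  intro n hn
  induction n, hn using Nat.le_induction with
  | base =>
    intro j
    rw [mul_assoc, ← Real.rpow_add hn0']
    simp only [add_neg_cancel, Real.rpow_zero, mul_one]
    by_cases hj : j ≤ n0
    · exact Finset.single_le_sum (f := fun j => |mld a 3 n0 j|) (fun _ _ => abs_nonneg _) (by simp; omega)
    · rw [mld_support a 3 n0 j (by omega)]; simp; positivity
  | succ n hn ih =>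
    intro j
    set C := S * (n0 : ℝ) ^ (4 * a) with hC
    have hC0 : 0 ≤ C := by positivity
    have hn' : (0 : ℝ) < n := by
      have : (n0 : ℝ) ≤ n := by exact_mod_cast hn
      linarith
    have hbig : 4 * a ≤ (1 - a) * (n + 1) := by
      have : (n0 : ℝ) ≤ n := by exact_mod_cast hn
      rw [div_lt_iff₀ hpos] at hn0
      nlinarith
    by_cases hj : j ≤ n + 1
    · have hjr : (j : ℝ) ≤ n + 1 := by exact_mod_cast hj
      rw [mld_rec]
      have hc1 : 0 ≤ 1 - a * (j + 1 + (3 : ℕ)) / (n + 1) := by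
        rw [sub_nonneg, div_le_one (by positivity)]
        push_cast
        nlinarith
      have hc2 : 0 ≤ a * j / (n + 1) := by positivity
      calc |(1 - a * (j + 1 + (3 : ℕ)) / (n + 1)) * mld a 3 n j + (a * j / (n + 1)) * mld a 3 n (j - 1)|
          ≤ (1 - a * (j + 1 + (3 : ℕ)) / (n + 1)) * (C * (n : ℝ) ^ (-(4 * a)))
            + (a * j / (n + 1)) * (C * (n : ℝ) ^ (-(4 * a))) := by
            refine (abs_add_le _ _).trans ?_
            rw [abs_mul, abs_mul, abs_of_nonneg hc1, abs_of_nonneg hc2]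
            gcongr
            · exact ih j
            · exact ih (j - 1)
        _ = (1 + (4 * a) * (-(1 / ((n : ℝ) + 1)))) * (C * (n : ℝ) ^ (-(4 * a))) := by
            push_cast; field_simp; ring
        _ ≤ (1 + (-(1 / ((n : ℝ) + 1)))) ^ (4 * a) * (C * (n : ℝ) ^ (-(4 * a))) := by
            gcongr
            apply one_add_mul_self_le_rpow_one_add
            · rw [neg_le_neg_iff, div_le_one (by positivity)]; linarith
            · linarith
        _ = C * ((n + 1 : ℕ) : ℝ) ^ (-(4 * a)) := by
            have : (1 + (-(1 / ((n : ℝ) + 1)))) = n / (n + 1) := by field_simp; ring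
            rw [this, Real.div_rpow hn'.le (by positivity), Real.rpow_neg hn'.le,
              Real.rpow_neg (by positivity)]
            push_cast
            have := Real.rpow_pos_of_pos hn' (4 * a)
            field_simp
    · rw [mld_support a 3 (n + 1) j (by omega)]; simp; positivity

open Filter Topology MeasureTheory

lemma ml_gamma_lower {x K : ℝ} (hx : 0 ≤ x) (hK : 0 < K) :
    K ^ x * Real.exp (-K) ≤ Real.Gamma (1 + x) := by
  have hx1 : 0 < 1 + x := by linarith
  rw [Real.Gamma_eq_integral hx1]
  have hintg := Real.GammaIntegral_convergent hx1
  have hsub : Set.Ioi K ⊆ Set.Ioi (0 : ℝ) := Set.Ioi_subset_Ioi hK.le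
  have h1 : ∫ s in Set.Ioi K, Real.exp (-s) * s ^ (1 + x - 1) ≤
      ∫ s in Set.Ioi 0, Real.exp (-s) * s ^ (1 + x - 1) := by
    refine MeasureTheory.setIntegral_mono_set hintg ?_ (Filter.Eventually.of_forall hsub)
    filter_upwards [MeasureTheory.ae_restrict_mem measurableSet_Ioi] with s hs
    have : (0 : ℝ) < s := hs
    simp only [Pi.zero_apply]
    positivity
  refine le_trans ?_ h1
  have h2 : K ^ x * Real.exp (-K) = ∫ s in Set.Ioi K, K ^ x * Real.exp (-s) := by
    rw [MeasureTheory.integral_const_mul, integral_exp_neg_Ioi]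
  rw [h2]
  refine MeasureTheory.setIntegral_mono_on ((integrableOn_exp_neg_Ioi K).const_mul _) (hintg.mono_set hsub)
    measurableSet_Ioi ?_
  intro s hs
  have hs' : K < s := hs
  rw [mul_comm, show 1 + x - 1 = x by ring]
  gcongr

lemma ml_term_bound {α0 α t K : ℝ} (h0 : 0 < α0) (h : α0 ≤ α) (hK : 1 ≤ K) (n : ℕ) :
    |t ^ n / Real.Gamma (1 + α * n)| ≤ Real.exp K * (|t| / K ^ α0) ^ n := by
  have hα : 0 < α := by linarith
  have h1 := ml_gamma_lower (x := α * n) (K := K) (by positivity) (by linarith)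
  have hK0 : 0 < K := by linarith
  have h2 : (K ^ α0) ^ n ≤ K ^ (α * n) := by
    rw [← Real.rpow_natCast, ← Real.rpow_mul hK0.le]
    exact Real.rpow_le_rpow_of_exponent_le hK (by gcongr)
  have hG : 0 < Real.Gamma (1 + α * n) := Real.Gamma_pos_of_pos (by positivity)
  have hp : 0 < (K ^ α0) ^ n := by positivity
  rw [abs_div, abs_pow, abs_of_pos hG, div_pow, div_le_iff₀ hG]
  have h3 : (K ^ α0) ^ n * Real.exp (-K) ≤ Real.Gamma (1 + α * n) := le_trans (by gcongr) h1
  calc |t| ^ n = Real.exp K * (|t| ^ n / (K ^ α0) ^ n) * ((K ^ α0) ^ n * Real.exp (-K)) := by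
        rw [Real.exp_neg]; field_simp
    _ ≤ _ := by gcongr

lemma ml_exists_K {α0 : ℝ} (h0 : 0 < α0) (t : ℝ) : ∃ K : ℝ, 1 ≤ K ∧ |t| / K ^ α0 ≤ 1 / 2 := by
  refine ⟨(2 * |t| + 1) ^ (1 / α0), ?_, ?_⟩
  · exact Real.one_le_rpow (by linarith [abs_nonneg t]) (by positivity)
  · rw [← Real.rpow_mul (by positivity)]
    rw [one_div_mul_cancel h0.ne', Real.rpow_one, div_le_div_iff₀ (by positivity) (by norm_num)]
    linarith

lemma ml_summable {α : ℝ} (h0 : 0 < α) (t : ℝ) :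
    Summable (fun n : ℕ => t ^ n / Real.Gamma (1 + α * n)) := by
  obtain ⟨K, hK, hK2⟩ := ml_exists_K h0 t
  refine Summable.of_norm_bounded (g := fun n : ℕ => Real.exp K * (1 / 2 : ℝ) ^ n)
    ((summable_geometric_of_lt_one (by norm_num) (by norm_num)).mul_left _) ?_
  intro n
  rw [Real.norm_eq_abs]
  refine (ml_term_bound h0 le_rfl hK n).trans ?_
  gcongr

lemma ml_continuous_param {αs : ℝ} (h0 : 0 < αs) (t : ℝ) :
    ContinuousAt (fun α => mittagLeffler α 1 t) αs := by
  unfold ContinuousAt mittagLeffler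
  obtain ⟨K, hK, hK2⟩ := ml_exists_K (half_pos h0) t
  refine tendsto_tsum_of_dominated_convergence (bound := fun n : ℕ => Real.exp K * (1 / 2 : ℝ) ^ n)
    ((summable_geometric_of_lt_one (by norm_num) (by norm_num)).mul_left _) ?_ ?_
  · intro n
    have hg : ContinuousAt Real.Gamma (1 + αs * n) := by
      refine (Real.differentiableAt_Gamma fun m => ?_).continuousAt
      have : 0 < 1 + αs * n := by positivity
      have : (0 : ℝ) ≤ m := by positivity
      linarith
    have hne : Real.Gamma (1 + αs * n) ≠ 0 := (Real.Gamma_pos_of_pos (by positivity)).ne'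
    have hc : ContinuousAt (fun α : ℝ => Real.Gamma (1 + α * n)) αs :=
      ContinuousAt.comp (f := fun α : ℝ => 1 + α * n) hg (by fun_prop)
    exact (continuousAt_const.div hc hne)
  · filter_upwards [Ioi_mem_nhds (show αs / 2 < αs by linarith)] with α hα n
    rw [Real.norm_eq_abs]
    refine (ml_term_bound (half_pos h0) (le_of_lt hα) hK n).trans ?_
    gcongr

lemma mlgp_tendsto (z : ℝ) :
    Tendsto (fun n : ℕ => mlgp z n * (n : ℝ) ^ (-z)) atTop (𝓝 (1 / Real.Gamma (1 + z))) := by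
  by_cases hz : ∃ m : ℕ, 1 + z = -m
  · obtain ⟨m, hm⟩ := hz
    rw [hm, Real.Gamma_neg_nat_eq_zero, div_zero]
    refine tendsto_const_nhds.congr' ?_
    filter_upwards [eventually_gt_atTop m] with n hn
    have : mlgp z n = 0 := by
      unfold mlgp
      refine Finset.prod_eq_zero (Finset.mem_range.2 hn) ?_
      have : (m : ℝ) + 1 ≠ 0 := by positivity
      field_simp; linarith
    rw [this, zero_mul]
  · push Not at hz
    have hne : Real.Gamma (1 + z) ≠ 0 := Real.Gamma_ne_zero hz
    have h1 := (Real.GammaSeq_tendsto_Gamma (1 + z)).inv₀ hne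
    have h2 : Tendsto (fun n : ℕ => (n : ℝ) / (n + (1 + z))) atTop (𝓝 1) := by
      have h3 : Tendsto (fun n : ℕ => 1 + (1 + z) / (n : ℝ)) atTop (𝓝 (1 + 0)) :=
        tendsto_const_nhds.add (tendsto_const_div_atTop_nhds_zero_nat _)
      rw [add_zero] at h3
      have h4 := h3.inv₀ one_ne_zero
      rw [inv_one] at h4
      refine h4.congr' ?_
      filter_upwards [eventually_gt_atTop 0] with n hn
      have : (0 : ℝ) < n := by exact_mod_cast hn
      rw [← one_div, one_add_div this.ne', one_div_div]
    have h3 := h1.mul h2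
    rw [mul_one, ← one_div] at h3
    refine h3.congr' ?_
    filter_upwards [eventually_gt_atTop 0] with n hn
    have hn' : (0 : ℝ) < n := by exact_mod_cast hn
    have hprod : ∀ n : ℕ, ∏ j ∈ Finset.range (n + 1), (1 + z + (j : ℝ)) =
        (n.factorial : ℝ) * mlgp z n * (n + (1 + z)) := by
      intro n
      rw [Finset.prod_range_succ]
      have : ∏ j ∈ Finset.range n, (1 + z + (j : ℝ)) = (n.factorial : ℝ) * mlgp z n := by
        induction n with
        | zero => simp [mlgp]
        | succ n ih =>
          rw [Finset.prod_range_succ, ih, mlgp_succ, Nat.factorial_succ]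
          push_cast
          have : (n : ℝ) + 1 ≠ 0 := by positivity
          field_simp; ring
      rw [this]; ring
    have hnz : (n : ℝ) + (1 + z) ≠ 0 := by
      intro h; exact hz n (by linarith)
    have hf : (n.factorial : ℝ) ≠ 0 := by positivity
    rw [Real.GammaSeq, hprod, Real.rpow_add hn', Real.rpow_one, Real.rpow_neg hn'.le]
    have := (Real.rpow_pos_of_pos hn' z).ne'
    field_simp

lemma ml_rem_step (y : ℝ) (j M : ℕ) :
    (1 + y) * ∑ m ∈ Finset.range (M + 1), (-y) ^ m * ((j + 1 + m).choose m : ℝ) =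
    ∑ m ∈ Finset.range (M + 1), (-y) ^ m * ((j + m).choose m : ℝ)
      - (-y) ^ (M + 1) * ((j + 1 + M).choose M : ℝ) := by
  induction M with
  | zero => simp
  | succ M ih =>
    rw [Finset.sum_range_succ, mul_add, ih, Finset.sum_range_succ _ (M + 1)]
    have : ((j + 1 + (M + 1)).choose (M + 1) : ℝ) = ((j + 1 + M).choose M : ℝ) + ((j + (M + 1)).choose (M + 1) : ℝ) := by
      rw [show j + 1 + (M + 1) = (j + 1 + M) + 1 by ring, Nat.choose_succ_succ,
        show j + 1 + M = j + (M + 1) by ring]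
      push_cast; ring
    rw [this]; ring

lemma ml_rem {y : ℝ} (hy : 0 ≤ y) (M j : ℕ) :
    |((1 + y)⁻¹) ^ (j + 1) - ∑ m ∈ Finset.range M, (-y) ^ m * ((j + m).choose m : ℝ)| ≤
      y ^ M * ((j + M).choose M : ℝ) := by
  have h1 : 0 < 1 + y := by linarith
  cases M with
  | zero =>
    simp only [Finset.range_zero, Finset.sum_empty, sub_zero, pow_zero, Nat.choose_zero_right, Nat.cast_one, mul_one]
    rw [abs_of_nonneg (by positivity)]
    exact pow_le_one₀ (by positivity) (inv_le_one_of_one_le₀ (by linarith))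
  | succ M =>
    induction j with
    | zero =>
      have hg : (1 + y) * ∑ m ∈ Finset.range (M + 1), (-y) ^ m = 1 - (-y) ^ (M + 1) := by
        have := mul_neg_geom_sum (-y) (M + 1)
        rw [sub_neg_eq_add] at this
        exact this
      have : ((1 + y)⁻¹) ^ (0 + 1) - ∑ m ∈ Finset.range (M + 1), (-y) ^ m * ((0 + m).choose m : ℝ) =
          (-y) ^ (M + 1) / (1 + y) := by
        simp only [zero_add, pow_one, Nat.choose_self, Nat.cast_one, mul_one]
        field_simp
        rw [hg]; ring
      rw [this, abs_div, abs_pow, abs_neg, abs_of_nonneg hy, abs_of_pos h1]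
      simp only [zero_add, Nat.choose_self, Nat.cast_one, mul_one]
      exact div_le_self (by positivity) (by linarith)
    | succ j ih =>
      set A := ∑ m ∈ Finset.range (M + 1), (-y) ^ m * ((j + m).choose m : ℝ)
      set B := ∑ m ∈ Finset.range (M + 1), (-y) ^ m * ((j + 1 + m).choose m : ℝ)
      have hs : (1 + y) * B = A - (-y) ^ (M + 1) * ((j + 1 + M).choose M : ℝ) := ml_rem_step y j M
      have e : ((1 + y)⁻¹) ^ (j + 1 + 1) - B = (1 + y)⁻¹ * (((1 + y)⁻¹ ^ (j + 1) - A) + (-y) ^ (M + 1) * ((j + 1 + M).choose M : ℝ)) := by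
        have : B = (1 + y)⁻¹ * ((1 + y) * B) := by field_simp
        rw [this, hs]; ring
      have hc : ((j + 1 + (M + 1)).choose (M + 1) : ℝ) = ((j + (M + 1)).choose (M + 1) : ℝ) + ((j + 1 + M).choose M : ℝ) := by
        rw [show j + 1 + (M + 1) = (j + 1 + M) + 1 by ring, Nat.choose_succ_succ,
          show j + 1 + M = j + (M + 1) by ring]
        push_cast; ring
      rw [e, abs_mul, abs_of_nonneg (a := (1 + y)⁻¹) (by positivity), hc, mul_add]
      have h3 : |((1 + y)⁻¹ ^ (j + 1) - A) + (-y) ^ (M + 1) * ((j + 1 + M).choose M : ℝ)| ≤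
          y ^ (M + 1) * ((j + (M + 1)).choose (M + 1) : ℝ) + y ^ (M + 1) * ((j + 1 + M).choose M : ℝ) := by
        refine (abs_add_le _ _).trans (add_le_add ih ?_)
        rw [abs_mul, abs_pow, abs_neg, abs_of_nonneg hy, abs_of_nonneg (Nat.cast_nonneg _)]
      refine le_trans ?_ h3
      exact mul_le_of_le_one_left (abs_nonneg _) (inv_le_one_of_one_le₀ (by linarith))

noncomputable def mlQ (a : ℝ) (n : ℕ) (y : ℝ) : ℝ :=
  ∑ j ∈ Finset.range (n + 1), mlq a n j * ((1 + y)⁻¹) ^ (j + 1)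

lemma mlQ_rem {a y : ℝ} (h0 : 0 ≤ a) (h1 : a ≤ 1) (hy : 0 ≤ y) (n M : ℕ) :
    |mlQ a n y - ∑ m ∈ Finset.range M, (-y) ^ m * mlgp (a * m) n| ≤ y ^ M * mlgp (a * M) n := by
  have e : mlQ a n y - ∑ m ∈ Finset.range M, (-y) ^ m * mlgp (a * m) n =
      ∑ j ∈ Finset.range (n + 1), mlq a n j *
        (((1 + y)⁻¹) ^ (j + 1) - ∑ m ∈ Finset.range M, (-y) ^ m * ((j + m).choose m : ℝ)) := by
    simp only [mul_sub, Finset.sum_sub_distrib, mlQ]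
    congr 1
    simp only [Finset.mul_sum]
    rw [Finset.sum_comm]
    refine Finset.sum_congr rfl fun m _ => ?_
    rw [← mlq_moment, Finset.mul_sum]
    exact Finset.sum_congr rfl fun j _ => by ring
  rw [e, ← mlq_moment, Finset.mul_sum]
  refine (Finset.abs_sum_le_sum_abs _ _).trans (Finset.sum_le_sum fun j _ => ?_)
  rw [abs_mul, abs_of_nonneg (mlq_nonneg h0 h1 n j)]
  calc _ ≤ mlq a n j * (y ^ M * ((j + M).choose M : ℝ)) :=
        mul_le_mul_of_nonneg_left (ml_rem hy M j) (mlq_nonneg h0 h1 n j)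
    _ = _ := by ring

lemma mlQ_tendsto {a t : ℝ} (h0 : 0 < a) (h1 : a ≤ 1) (ht : 0 ≤ t) :
    Tendsto (fun n : ℕ => mlQ a n (t * (n : ℝ) ^ (-a))) atTop (𝓝 (mittagLeffler a 1 (-t))) := by
  have hterm : ∀ (s : ℝ) (m : ℕ), Tendsto (fun n : ℕ => (s * (n : ℝ) ^ (-a)) ^ m * mlgp (a * m) n) atTop
      (𝓝 (s ^ m / Real.Gamma (1 + a * m))) := by
    intro s m
    have h := (mlgp_tendsto (a * m)).const_mul (s ^ m)
    rw [mul_one_div] at h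
    refine h.congr' ?_
    filter_upwards with n
    rw [mul_pow, ← Real.rpow_natCast ((n : ℝ) ^ (-a)), ← Real.rpow_mul (Nat.cast_nonneg n),
      show -a * (m : ℝ) = -(a * m) by ring]
    ring
  have hsum := (ml_summable h0 (-t)).hasSum.tendsto_sum_nat
  have hz := (ml_summable h0 t).tendsto_atTop_zero
  rw [Metric.tendsto_atTop]
  intro ε hε
  have hε4 : 0 < ε / 4 := by linarith
  obtain ⟨M1, hM1'⟩ := Metric.tendsto_atTop.1 hsum (ε / 4) hε4
  obtain ⟨M2, hM2'⟩ := Metric.tendsto_atTop.1 hz (ε / 4) hε4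
  obtain ⟨M, hM⟩ : ∃ M, M = max M1 M2 := ⟨_, rfl⟩
  have hM1 := hM1' M (hM ▸ le_max_left _ _)
  have hM2 := hM2' M (hM ▸ le_max_right _ _)
  clear hM1' hM2'
  have hS : Tendsto (fun n : ℕ => ∑ m ∈ Finset.range M, ((-t) * (n : ℝ) ^ (-a)) ^ m * mlgp (a * m) n) atTop
      (𝓝 (∑ m ∈ Finset.range M, (-t) ^ m / Real.Gamma (1 + a * m))) :=
    tendsto_finsetSum _ fun m _ => hterm (-t) m
  obtain ⟨N1, hN1⟩ := Metric.tendsto_atTop.1 hS (ε / 4) hε4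
  obtain ⟨N2, hN2⟩ := Metric.tendsto_atTop.1 (hterm t M) (ε / 4) hε4
  refine ⟨max N1 N2, fun n hn => ?_⟩
  have a1 := hN1 n (le_trans (le_max_left _ _) hn)
  have a2 := hN2 n (le_trans (le_max_right _ _) hn)
  have hr := mlQ_rem h0.le h1 (y := t * (n : ℝ) ^ (-a)) (by positivity) n M
  rw [show -(t * (n : ℝ) ^ (-a)) = (-t) * (n : ℝ) ^ (-a) by ring] at hr
  rw [Real.dist_eq] at *
  unfold mittagLeffler
  rw [abs_lt] at *
  rw [abs_le] at hr
  constructor <;> linarith [hr.1, hr.2, a1.1, a1.2, a2.1, a2.2, hM1.1, hM1.2, hM2.1, hM2.2]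

def MlLC (a : ℝ) (n : ℕ) : Prop := ∀ j, mlq a n j * mlq a n (j + 2) ≤ mlq a n (j + 1) ^ 2

lemma mlq_e012 (a : ℝ) (n : ℕ) : mlq a n 0 = mlgp (-a) n ∧ mlq a n 1 = mlgp (-a) n - mlgp (-(2 * a)) n ∧
    mlq a n 2 = mlgp (-a) n - 2 * mlgp (-(2 * a)) n + mlgp (-(3 * a)) n := by
  refine ⟨?_, ?_, ?_⟩
  · rw [mlq_eq_sum]; simp
  · rw [mlq_eq_sum]; simp [Finset.sum_range_succ]; 
    rw [show a * (1 + 1) = 2 * a by ring]; ring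
  · rw [mlq_eq_sum]; simp [Finset.sum_range_succ]; 
    rw [show a * (1 + 1) = 2 * a by ring, show a * (2 + 1) = 3 * a by ring]; ring

lemma mlq_delta1 (a : ℝ) (n : ℕ) : mlq a n 1 ^ 2 - mlq a n 0 * mlq a n 2 =
    mlgp (-(2 * a)) n ^ 2 - mlgp (-a) n * mlgp (-(3 * a)) n := by
  obtain ⟨h0, h1, h2⟩ := mlq_e012 a n
  rw [h0, h1, h2]; ring

lemma mlgp_delta {a : ℝ} (h0 : 0 < a) (h1 : a ≤ 1 / 2) (n : ℕ) :
    mlgp (-a) n * mlgp (-(3 * a)) n ≤ mlgp (-(2 * a)) n ^ 2 := by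
  induction n with
  | zero => simp [mlgp]
  | succ n ih =>
    rcases Nat.eq_zero_or_pos n with rfl | hn
    · simp [mlgp]; nlinarith
    · rw [mlgp_succ, mlgp_succ, mlgp_succ]
      have hn' : (1 : ℝ) ≤ n := by exact_mod_cast hn
      obtain ⟨b, hb⟩ : ∃ b, b = a / (n + 1) := ⟨_, rfl⟩
      have hb0 : 0 ≤ b := by rw [hb]; positivity
      have hb1 : b ≤ 1 / 4 := by rw [hb, div_le_iff₀ (by positivity)]; linarith
      rw [show -a / ((n : ℝ) + 1) = -b by rw [hb]; ring, show -(3 * a) / ((n : ℝ) + 1) = -(3 * b) by rw [hb]; ring,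
        show -(2 * a) / ((n : ℝ) + 1) = -(2 * b) by rw [hb]; ring]
      have hx : 0 ≤ (1 + -b) * (1 + -(3 * b)) := by apply mul_nonneg <;> linarith
      have hx2 : (1 + -b) * (1 + -(3 * b)) ≤ (1 + -(2 * b)) ^ 2 := by nlinarith
      calc _ = mlgp (-a) n * mlgp (-(3 * a)) n * ((1 + -b) * (1 + -(3 * b))) := by ring
        _ ≤ mlgp (-(2 * a)) n ^ 2 * ((1 + -b) * (1 + -(3 * b))) := by gcongr
        _ ≤ mlgp (-(2 * a)) n ^ 2 * (1 + -(2 * b)) ^ 2 := by gcongr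
        _ = _ := by ring

lemma mlLC_half {a : ℝ} (h0 : 0 < a) (h1 : a ≤ 1 / 2) (n : ℕ) :
    (∀ j, mlq a n (j + 1) ≤ mlq a n j) ∧ MlLC a n := by
  induction n with
  | zero => constructor <;> intro j <;> simp [mlq]; split_ifs <;> norm_num
  | succ n ih =>
    obtain ⟨hd, hlc⟩ := ih
    have hnn := mlq_nonneg h0.le (by linarith : a ≤ 1)
    have hk : (0 : ℝ) < n + 1 := by positivity
    have hr : ∀ j : ℕ, ((n : ℝ) + 1) * mlq a (n + 1) j = (n + 1 - a * (j + 1)) * mlq a n j + a * j * mlq a n (j - 1) := by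
      intro j; rw [mlq_succ]; field_simp
    constructor
    · intro j
      by_cases hj : j ≤ n
      · have hjr : (j : ℝ) ≤ n := by exact_mod_cast hj
        have e1 := hr j
        have e2 := hr (j + 1)
        rw [Nat.add_sub_cancel] at e2
        push_cast at e2
        have hj0 : (0 : ℝ) ≤ j := by positivity
        have hc : 0 ≤ (n : ℝ) + 1 - a * (j + 2) := by nlinarith
        have p1 : 0 ≤ ((n : ℝ) + 1 - a * (j + 2)) * (mlq a n j - mlq a n (j + 1)) :=
          mul_nonneg hc (sub_nonneg.2 (hd j))
        have p2 : 0 ≤ a * j * (mlq a n (j - 1) - mlq a n j) := by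
          cases j with
          | zero => simp
          | succ j => exact mul_nonneg (by positivity) (sub_nonneg.2 (hd j))
        have : ((n : ℝ) + 1) * mlq a (n + 1) (j + 1) ≤ ((n : ℝ) + 1) * mlq a (n + 1) j := by
          rw [e1, e2]; linarith
        exact le_of_mul_le_mul_left this hk
      · rw [mlq_support a (n + 1) (j + 1) (by omega)]; exact hnn _ _
    · intro j
      rcases Nat.eq_zero_or_pos j with rfl | hj
      · have := mlq_delta1 a (n + 1)
        have := mlgp_delta h0 h1 (n + 1)
        simp only [zero_add]; linarith
      by_cases hjn : j + 1 ≤ n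
      · obtain ⟨i, rfl⟩ : ∃ i, j = i + 1 := ⟨j - 1, by omega⟩
        have e1 := hr (i + 1)
        have e2 := hr (i + 1 + 1)
        have e3 := hr (i + 1 + 2)
        simp only [Nat.add_sub_cancel, show i + 1 + 2 - 1 = i + 1 + 1 by omega] at e1 e2 e3
        push_cast at e1 e2 e3
        have hjr : (i : ℝ) + 2 ≤ n := by exact_mod_cast hjn
        have hi0 : (0 : ℝ) ≤ i := by positivity
        obtain ⟨A, hA⟩ : ∃ A : ℝ, A = n + 1 - a * (i + 3) := ⟨_, rfl⟩
        obtain ⟨B, hB⟩ : ∃ B : ℝ, B = a * (i + 2) := ⟨_, rfl⟩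
        have hlc1 := hlc i
        have hlc2 := hlc (i + 1)
        have hd1 := hd i
        have hd2 := hd (i + 2)
        have hp := mlq_pos h0 (by linarith) n (i + 2) hjn
        have n0 := hnn n i
        have n1 := hnn n (i + 1)
        have n3 := hnn n (i + 3)
        simp only [show i + 1 + 1 = i + 2 by ring, show i + 1 + 2 = i + 3 by ring] at *
        generalize mlq a n i = q0 at *
        generalize mlq a n (i + 1) = q1 at *
        generalize mlq a n (i + 2) = q2 at *
        generalize mlq a n (i + 3) = q3 at *
        have hx : q0 * q3 ≤ q1 * q2 := by
          refine le_of_mul_le_mul_left ?_ hp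
          nlinarith
        have hAB : 0 ≤ A * B - a * (A + B) := by
          have hA2 : ((n : ℝ) + 1) / 2 ≤ A := by rw [hA]; nlinarith
          have : A * B - a * (A + B) = a * ((i + 2) * A - (n + 1) + a) := by rw [hB, hA]; ring
          rw [this]
          refine mul_nonneg h0.le ?_
          nlinarith
        have key : (((n : ℝ) + 1) * mlq a (n + 1) (i + 2)) ^ 2
            - (((n : ℝ) + 1) * mlq a (n + 1) (i + 1)) * (((n : ℝ) + 1) * mlq a (n + 1) (i + 3)) =
            A ^ 2 * (q2 ^ 2 - q1 * q3) + B ^ 2 * (q1 ^ 2 - q0 * q2)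
            + (A * B - a * (A + B)) * (q1 * q2 - q0 * q3) + a ^ 2 * ((q2 - q3) * (q0 - q1)) := by
          rw [e1, e2, e3, hA, hB]; ring
        have t1 : 0 ≤ A ^ 2 * (q2 ^ 2 - q1 * q3) := mul_nonneg (sq_nonneg _) (by linarith)
        have t2 : 0 ≤ B ^ 2 * (q1 ^ 2 - q0 * q2) := mul_nonneg (sq_nonneg _) (by linarith)
        have t3 : 0 ≤ (A * B - a * (A + B)) * (q1 * q2 - q0 * q3) := mul_nonneg hAB (by linarith)
        have t4 : 0 ≤ a ^ 2 * ((q2 - q3) * (q0 - q1)) :=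
          mul_nonneg (sq_nonneg _) (mul_nonneg (by linarith) (by linarith))
        have : 0 ≤ ((n : ℝ) + 1) ^ 2 * (mlq a (n + 1) (i + 2) ^ 2 - mlq a (n + 1) (i + 1) * mlq a (n + 1) (i + 3)) := by
          linarith
        have := nonneg_of_mul_nonneg_right this (by positivity)
        linarith
      · rw [mlq_support a (n + 1) (j + 2) (by omega), mul_zero]
        positivity

section lc
variable {q : ℕ → ℝ} {n : ℕ}

lemma lc_step (hpos : ∀ j, j ≤ n → 0 < q j) (hnn : ∀ j, 0 ≤ q j) (hsup : ∀ j, n < j → q j = 0)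
    (hlc : ∀ j, q j * q (j + 2) ≤ q (j + 1) ^ 2) (i d : ℕ) :
    q i * q (i + d + 1) ≤ q (i + 1) * q (i + d) := by
  induction d with
  | zero => simp [mul_comm]
  | succ d ih =>
    by_cases h : i + d + 2 ≤ n
    · have p1 := hpos (i + d) (by omega)
      have p2 := hpos (i + d + 1) (by omega)
      have h1 := hlc (i + d)
      have e1 : q (i + (d + 1) + 1) = q (i + d + 2) := by congr 1
      have e2 : q (i + (d + 1)) = q (i + d + 1) := by congr 1
      rw [e1, e2]
      refine le_of_mul_le_mul_left ?_ (mul_pos p1 p2)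
      calc q (i + d) * q (i + d + 1) * (q i * q (i + d + 2))
          = (q i * q (i + d + 1)) * (q (i + d) * q (i + d + 2)) := by ring
        _ ≤ (q (i + 1) * q (i + d)) * (q (i + d + 1) ^ 2) :=
          mul_le_mul ih h1 (mul_nonneg (hnn _) (hnn _)) (mul_nonneg (hnn _) (hnn _))
        _ = _ := by ring
    · rw [hsup (i + (d + 1) + 1) (by omega), mul_zero]
      exact mul_nonneg (hnn _) (hnn _)

lemma lc_mono (hst : ∀ i d, q i * q (i + d + 1) ≤ q (i + 1) * q (i + d)) (s i k : ℕ) (hik : i ≤ k) (hks : 2 * k ≤ s) :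
    q i * q (s - i) ≤ q k * q (s - k) := by
  induction k, hik using Nat.le_induction with
  | base => exact le_rfl
  | succ k hik ih =>
    refine (ih (by omega)).trans ?_
    have := hst k (s - 2 * k - 1)
    rw [show k + (s - 2 * k - 1) + 1 = s - k by omega, show k + (s - 2 * k - 1) = s - (k + 1) by omega] at this
    exact this

lemma lc_mono2 (hst : ∀ i d, q i * q (i + d + 1) ≤ q (i + 1) * q (i + d)) (s i k : ℕ) (hik : i ≤ k) (hks : i + k ≤ s) :
    q i * q (s - i) ≤ q k * q (s - k) := by
  by_cases h : 2 * k ≤ s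
  · exact lc_mono hst s i k hik h
  · have := lc_mono hst s i (s - k) (by omega) (by omega)
    rw [show s - (s - k) = k by omega] at this
    linarith

lemma lc_sum_c (s : ℕ) : ∑ i ∈ Finset.range (s + 1), (3 * (((i : ℝ) + 1) * ((s : ℝ) - i + 1)) - (s + 2) * (s + 3) / 2) = 0 := by
  have h1 : ∀ m : ℕ, ∑ i ∈ Finset.range m, (3 * (((i : ℝ) + 1) * ((s : ℝ) - i + 1)) - (s + 2) * (s + 3) / 2) =
      3 * ((s + 1) * m + s * (m * (m - 1) / 2) - m * (m - 1) * (2 * m - 1) / 6) - m * ((s + 2) * (s + 3) / 2) := by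
    intro m
    induction m with
    | zero => simp
    | succ m ih => rw [Finset.sum_range_succ, ih]; push_cast; ring
  rw [h1]; push_cast; ring

lemma lc_antidiag (hst : ∀ i d, q i * q (i + d + 1) ≤ q (i + 1) * q (i + d)) (s : ℕ) :
    0 ≤ ∑ i ∈ Finset.range (s + 1), q i * q (s - i) * (2 * ((i + 1) * ((s - i : ℕ) + 1)) - (((s - i : ℕ) : ℝ) + 1) * ((s - i : ℕ) + 2)) := by
  have hch : 0 ≤ ∑ i ∈ Finset.range (s + 1), q i * q (s - i) * (3 * (((i : ℝ) + 1) * ((s : ℝ) - i + 1)) - (s + 2) * (s + 3) / 2) := by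
    have hm : MonovaryOn (fun i : ℕ => q i * q (s - i))
        (fun i : ℕ => 3 * (((i : ℝ) + 1) * ((s : ℝ) - i + 1)) - (s + 2) * (s + 3) / 2) (Finset.range (s + 1) : Set ℕ) := by
      intro i hi k hk hlt
      simp only [Finset.coe_range, Set.mem_Iio] at hi hk
      simp only at hlt ⊢
      have hp : ((i : ℝ) - k) * (s - i - k) < 0 := by linarith
      rcases mul_neg_iff.1 hp with ⟨h1, h2⟩ | ⟨h1, h2⟩
      · have h1' : k < i := by exact_mod_cast sub_pos.1 h1
        have h2' : s < i + k := by
          have : (s : ℝ) < i + k := by linarith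
          exact_mod_cast this
        have := lc_mono2 hst s (s - i) k (by omega) (by omega)
        rw [show s - (s - i) = i by omega] at this
        linarith
      · have h1' : i < k := by exact_mod_cast sub_neg.1 h1
        have h2' : i + k < s := by
          have : (i : ℝ) + k < s := by linarith
          exact_mod_cast this
        exact lc_mono2 hst s i k (by omega) (by omega)
    have := hm.sum_mul_sum_le_card_mul_sum
    rw [lc_sum_c, mul_zero, Finset.card_range] at this
    exact nonneg_of_mul_nonneg_right this (by positivity)
  set g : ℕ → ℝ := fun i => q i * q (s - i) * (2 * ((i + 1) * ((s - i : ℕ) + 1)) - (((s - i : ℕ) : ℝ) + 1) * ((s - i : ℕ) + 2)) with hg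
  have hrefl : ∑ i ∈ Finset.range (s + 1), g (s + 1 - 1 - i) = ∑ i ∈ Finset.range (s + 1), g i := Finset.sum_range_reflect g (s + 1)
  have h2 : 2 * ∑ i ∈ Finset.range (s + 1), g i = 2 * ∑ i ∈ Finset.range (s + 1), q i * q (s - i) * (3 * (((i : ℝ) + 1) * ((s : ℝ) - i + 1)) - (s + 2) * (s + 3) / 2) := by
    rw [two_mul]
    nth_rewrite 1 [← hrefl]
    rw [← Finset.sum_add_distrib, Finset.mul_sum]
    refine Finset.sum_congr rfl fun i hi => ?_
    have hi' : i ≤ s := by simpa [Nat.lt_succ_iff] using hi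
    simp only [hg, Nat.add_sub_cancel, show s - (s - i) = i by omega]
    rw [Nat.cast_sub hi']
    ring
  linarith

open Polynomial in
lemma lc_ineq (hpos : ∀ j, j ≤ n → 0 < q j) (hnn : ∀ j, 0 ≤ q j) (hsup : ∀ j, n < j → q j = 0)
    (hlc : ∀ j, q j * q (j + 2) ≤ q (j + 1) ^ 2) {w : ℝ} (hw : 0 ≤ w) :
    (∑ j ∈ Finset.range (n + 1), q j * w ^ j) * (∑ j ∈ Finset.range (n + 1), q j * ((j + 1) * (j + 2)) * w ^ j) ≤
    2 * (∑ j ∈ Finset.range (n + 1), q j * (j + 1) * w ^ j) ^ 2 := by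
  have hst := lc_step hpos hnn hsup hlc
  set P : (ℕ → ℝ) → ℝ[X] := fun c => ∑ j ∈ Finset.range (n + 1), C (q j * c j) * X ^ j with hP
  have hcoeff : ∀ c k, (P c).coeff k = q k * c k := by
    intro c k
    simp only [hP, finsetSum_coeff, coeff_C_mul, coeff_X_pow]
    simp only [mul_ite, mul_one, mul_zero, Finset.sum_ite_eq, Finset.mem_range]
    split_ifs with h
    · rfl
    · rw [hsup k (by omega), zero_mul]
  have heval : ∀ c, (P c).eval w = ∑ j ∈ Finset.range (n + 1), q j * c j * w ^ j := by
    intro c; simp [hP, eval_finsetSum]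
  set R : ℝ[X] := 2 * (P (fun j => j + 1) * P (fun j => j + 1)) - P (fun _ => 1) * P (fun j => (j + 1) * (j + 2)) with hR
  have hRc : ∀ s, 0 ≤ R.coeff s := by
    intro s
    have h := lc_antidiag hst s
    have : R.coeff s = ∑ i ∈ Finset.range (s + 1), q i * q (s - i) * (2 * ((i + 1) * ((s - i : ℕ) + 1)) - (((s - i : ℕ) : ℝ) + 1) * ((s - i : ℕ) + 2)) := by
      rw [hR, coeff_sub, coeff_ofNat_mul, coeff_mul, coeff_mul]
      simp only [hcoeff]
      rw [Finset.Nat.sum_antidiagonal_eq_sum_range_succ (fun i j => q i * ((i : ℝ) + 1) * (q j * ((j : ℝ) + 1))),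
        Finset.Nat.sum_antidiagonal_eq_sum_range_succ (fun i j => q i * 1 * (q j * (((j : ℝ) + 1) * (j + 2)))),
        Finset.mul_sum, ← Finset.sum_sub_distrib]
      exact Finset.sum_congr rfl fun i _ => by ring
    rw [this]; exact h
  have hRe : 0 ≤ R.eval w := by
    rw [eval_eq_sum_range]
    exact Finset.sum_nonneg fun i _ => mul_nonneg (hRc i) (pow_nonneg hw i)
  rw [hR] at hRe
  simp only [eval_sub, eval_mul, eval_ofNat, heval, mul_one] at hRe
  linarith

end lc

lemma mlQ_pos {a y : ℝ} (h0 : 0 < a) (h1 : a < 1) (n : ℕ) (hy : 0 ≤ y) : 0 < mlQ a n y := by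
  refine Finset.sum_pos (fun j hj => ?_) ⟨0, by simp⟩
  have := mlq_pos h0 h1 n j (by simpa [Nat.lt_succ_iff] using hj)
  positivity

lemma mlQ_convex {a : ℝ} (h0 : 0 < a) (h1 : a < 1) (n : ℕ) (h : MlLC a n) :
    ConvexOn ℝ (Set.Ici 0) (fun y => (mlQ a n y)⁻¹) := by
  set D1 : ℝ → ℝ := fun y => - ∑ j ∈ Finset.range (n + 1), mlq a n j * ((j + 1) * ((1 + y)⁻¹) ^ (j + 2)) with hD1
  set D2 : ℝ → ℝ := fun y => ∑ j ∈ Finset.range (n + 1), mlq a n j * ((j + 1) * ((j + 2) * ((1 + y)⁻¹) ^ (j + 3))) with hD2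
  have hpw : ∀ (y : ℝ), 0 ≤ y → ∀ k : ℕ, HasDerivAt (fun y : ℝ => ((1 + y)⁻¹) ^ (k + 1)) (-((k + 1) * ((1 + y)⁻¹) ^ (k + 2))) y := by
    intro y hy k
    have hne : 1 + y ≠ 0 := by positivity
    have h1 : HasDerivAt (fun y : ℝ => 1 + y) 1 y := (hasDerivAt_id y).const_add 1
    have := (h1.inv hne).pow (k + 1)
    have e : -(((k : ℝ) + 1) * ((1 + y)⁻¹) ^ (k + 2)) = ((k + 1 : ℕ) : ℝ) * ((1 + y)⁻¹) ^ (k + 1 - 1) * (-1 / (1 + y) ^ 2) := by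
      simp only [Nat.add_sub_cancel]
      push_cast
      rw [neg_div, ← inv_eq_one_div, ← inv_pow]
      ring
    rw [e]
    exact this
  have hd1 : ∀ y : ℝ, 0 ≤ y → HasDerivAt (mlQ a n) (D1 y) y := by
    intro y hy
    have : D1 y = ∑ j ∈ Finset.range (n + 1), mlq a n j * (-((j + 1) * ((1 + y)⁻¹) ^ (j + 2))) := by
      simp only [hD1, mul_neg, Finset.sum_neg_distrib]
    rw [this]
    exact HasDerivAt.fun_sum fun j _ => (hpw y hy j).const_mul _
  have hd2 : ∀ y : ℝ, 0 ≤ y → HasDerivAt D1 (D2 y) y := by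
    intro y hy
    have : D2 y = -∑ j ∈ Finset.range (n + 1), mlq a n j * ((j + 1) * (-((((j + 1 : ℕ) : ℝ) + 1) * ((1 + y)⁻¹) ^ (j + 1 + 2)))) := by
      rw [hD2, ← Finset.sum_neg_distrib]
      exact Finset.sum_congr rfl fun j _ => by push_cast; ring
    rw [this]
    exact (HasDerivAt.fun_sum fun j _ => ((hpw y hy (j + 1)).const_mul _).const_mul _).neg
  have hQ : ∀ y : ℝ, 0 ≤ y → mlQ a n y ≠ 0 := fun y hy => (mlQ_pos h0 h1 n hy).ne'
  have hdi : ∀ y : ℝ, 0 ≤ y → HasDerivAt (fun y => (mlQ a n y)⁻¹) (-D1 y / mlQ a n y ^ 2) y := fun y hy =>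
    (hd1 y hy).inv (hQ y hy)
  refine convexOn_of_hasDerivWithinAt2_nonneg (f' := fun y => -D1 y / mlQ a n y ^ 2)
    (f'' := fun y => (-D2 y * mlQ a n y ^ 2 - -D1 y * (((2 : ℕ) : ℝ) * mlQ a n y ^ (2 - 1) * D1 y)) / (mlQ a n y ^ 2) ^ 2)
    (convex_Ici 0) ?_ ?_ ?_ ?_
  · intro y hy; exact (hdi y hy).continuousAt.continuousWithinAt
  · intro y hy
    rw [interior_Ici] at hy ⊢
    exact (hdi y (le_of_lt hy)).hasDerivWithinAt
  · intro y hy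
    rw [interior_Ici] at hy ⊢
    have hy0 : (0 : ℝ) ≤ y := le_of_lt hy
    exact (((hd2 y hy0).neg).div ((hd1 y hy0).pow 2) (pow_ne_zero 2 (hQ y hy0))).hasDerivWithinAt
  · intro y hy
    rw [interior_Ici] at hy
    have hy0 : (0 : ℝ) < y := hy
    have hw : 0 ≤ (1 + y)⁻¹ := by positivity
    have key := lc_ineq (mlq_pos h0 h1 n) (mlq_nonneg h0.le h1.le n) (mlq_support a n) h hw
    have e0 : mlQ a n y = (1 + y)⁻¹ * ∑ j ∈ Finset.range (n + 1), mlq a n j * ((1 + y)⁻¹) ^ j := by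
      rw [mlQ, Finset.mul_sum]; exact Finset.sum_congr rfl fun j _ => by ring
    have e1 : D1 y = -((1 + y)⁻¹ ^ 2 * ∑ j ∈ Finset.range (n + 1), mlq a n j * (j + 1) * ((1 + y)⁻¹) ^ j) := by
      simp only [hD1, Finset.mul_sum, neg_inj]; exact Finset.sum_congr rfl fun j _ => by ring
    have e2 : D2 y = (1 + y)⁻¹ ^ 3 * ∑ j ∈ Finset.range (n + 1), mlq a n j * ((j + 1) * (j + 2)) * ((1 + y)⁻¹) ^ j := by
      rw [hD2, Finset.mul_sum]; exact Finset.sum_congr rfl fun j _ => by ring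
    have hfin : mlQ a n y * D2 y ≤ 2 * D1 y ^ 2 := by
      rw [e0, e1, e2]
      calc _ = (1 + y)⁻¹ ^ 4 * ((∑ j ∈ Finset.range (n + 1), mlq a n j * ((1 + y)⁻¹) ^ j) *
            ∑ j ∈ Finset.range (n + 1), mlq a n j * ((j + 1) * (j + 2)) * ((1 + y)⁻¹) ^ j) := by ring
        _ ≤ (1 + y)⁻¹ ^ 4 * (2 * (∑ j ∈ Finset.range (n + 1), mlq a n j * (j + 1) * ((1 + y)⁻¹) ^ j) ^ 2) := by gcongr
        _ = _ := by ring
    have hQp := mlQ_pos h0 h1 n hy0.le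
    apply div_nonneg _ (by positivity)
    norm_num
    nlinarith [mul_nonneg hQp.le (sub_nonneg.2 hfin)]

/-- product form of convexity of the reciprocal -/
def MlRC (f : ℝ → ℝ) : Prop := ∀ s t μ : ℝ, 0 ≤ s → 0 ≤ t → 0 ≤ μ → μ ≤ 1 →
  f s * f t ≤ f (μ * s + (1 - μ) * t) * (μ * f t + (1 - μ) * f s)

lemma mlRC_of_convex {f : ℝ → ℝ} (hf : ∀ y, 0 ≤ y → 0 < f y) (h : ConvexOn ℝ (Set.Ici 0) (fun y => (f y)⁻¹)) :
    MlRC f := by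
  intro s t μ hs ht hμ0 hμ1
  have := h.2 hs ht hμ0 (sub_nonneg.2 hμ1) (by ring)
  simp only [smul_eq_mul] at this
  have hp := hf s hs
  have hp2 := hf t ht
  have hp3 := hf (μ * s + (1 - μ) * t) (add_nonneg (mul_nonneg hμ0 hs) (mul_nonneg (sub_nonneg.2 hμ1) ht))
  generalize f (μ * s + (1 - μ) * t) = F at *
  have e : μ * (f s)⁻¹ + (1 - μ) * (f t)⁻¹ = (μ * f t + (1 - μ) * f s) / (f s * f t) := by field_simp
  rw [e, ← one_div, div_le_div_iff₀ hp3 (mul_pos hp hp2)] at this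
  linarith

lemma mlRC_of_LC {a : ℝ} (h0 : 0 < a) (h1 : a < 1) (h : ∀ᶠ n in atTop, MlLC a n) :
    MlRC (fun t => mittagLeffler a 1 (-t)) := by
  intro s t μ hs ht hμ0 hμ1
  have hτ : 0 ≤ μ * s + (1 - μ) * t := add_nonneg (mul_nonneg hμ0 hs) (mul_nonneg (sub_nonneg.2 hμ1) ht)
  have ls := mlQ_tendsto h0 h1.le hs
  have lt := mlQ_tendsto h0 h1.le ht
  have lτ := mlQ_tendsto h0 h1.le hτ
  refine le_of_tendsto_of_tendsto (ls.mul lt) (lτ.mul ((lt.const_mul μ).add (ls.const_mul (1 - μ)))) ?_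
  filter_upwards [h] with n hn
  have := mlRC_of_convex (fun y hy => mlQ_pos h0 h1 n hy) (mlQ_convex h0 h1 n hn) (s * (n : ℝ) ^ (-a)) (t * (n : ℝ) ^ (-a)) μ
    (by positivity) (by positivity) hμ0 hμ1
  rw [show μ * (s * (n : ℝ) ^ (-a)) + (1 - μ) * (t * (n : ℝ) ^ (-a)) = (μ * s + (1 - μ) * t) * (n : ℝ) ^ (-a) by ring] at this
  exact this

lemma mlRC_half {a : ℝ} (h0 : 0 < a) (h1 : a ≤ 1 / 2) : MlRC (fun t => mittagLeffler a 1 (-t)) :=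
  mlRC_of_LC h0 (by linarith) (Eventually.of_forall fun n => (mlLC_half h0 h1 n).2)

lemma mlg_int {s c : ℝ} (hs : 0 < s) (hc : 0 < c) :
    IntegrableOn (fun t : ℝ => t ^ (s - 1) * Real.exp (-(c * t))) (Set.Ioi 0) := by
  have := integrableOn_rpow_mul_exp_neg_mul_rpow (p := 1) (s := s - 1) (b := c) (by linarith) one_pos hc
  simpa using this

lemma mlg_norm {s t : ℝ} (ht : 0 < t) (r : ℂ) :
    ‖((t ^ (s - 1) : ℝ) : ℂ) * Complex.exp (-(r * t))‖ = t ^ (s - 1) * Real.exp (-(r.re * t)) := by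
  rw [norm_mul, Complex.norm_real, Complex.norm_exp, Real.norm_eq_abs, abs_of_pos (Real.rpow_pos_of_pos ht _)]
  simp

lemma mlg_meas (s : ℝ) (r : ℂ) :
    AEStronglyMeasurable (fun t : ℝ => ((t ^ (s - 1) : ℝ) : ℂ) * Complex.exp (-(r * t))) (volume.restrict (Set.Ioi 0)) := by
  apply Measurable.aestronglyMeasurable
  fun_prop

lemma mlg_cint {s : ℝ} (hs : 0 < s) {r : ℂ} (hr : 0 < r.re) :
    IntegrableOn (fun t : ℝ => ((t ^ (s - 1) : ℝ) : ℂ) * Complex.exp (-(r * t))) (Set.Ioi 0) := by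
  refine (mlg_int hs hr).mono' (mlg_meas s r) ?_
  filter_upwards [ae_restrict_mem measurableSet_Ioi] with t ht
  rw [mlg_norm ht]

lemma mlg_gamma {s : ℝ} (hs : 0 < s) {r : ℂ} (hr : 0 < r.re) :
    ∫ t in Set.Ioi (0 : ℝ), ((t ^ (s - 1) : ℝ) : ℂ) * Complex.exp (-(r * t)) =
      Complex.exp (-(s * Complex.log r)) * Real.Gamma s := by
  set U : Set ℂ := {z | 0 < z.re} with hU
  have hUo : IsOpen U := isOpen_lt continuous_const Complex.continuous_re
  have hUc : IsPreconnected U := (convex_halfSpace_re_gt 0).isPreconnected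
  have hF : DifferentiableOn ℂ (fun r : ℂ => ∫ t in Set.Ioi (0 : ℝ), ((t ^ (s - 1) : ℝ) : ℂ) * Complex.exp (-(r * t))) U := by
    intro r hr
    have hr' : 0 < r.re := hr
    refine DifferentiableAt.differentiableWithinAt ?_
    have := hasDerivAt_integral_of_dominated_loc_of_deriv_le (μ := volume.restrict (Set.Ioi (0 : ℝ)))
      (F := fun (r : ℂ) (t : ℝ) => ((t ^ (s - 1) : ℝ) : ℂ) * Complex.exp (-(r * t)))
      (F' := fun (r : ℂ) (t : ℝ) => ((t ^ (s - 1) : ℝ) : ℂ) * (Complex.exp (-(r * t)) * (-(1 * (t : ℂ)))))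
      (bound := fun t : ℝ => t ^ ((s + 1) - 1) * Real.exp (-(r.re / 2 * t)))
      (s := {z : ℂ | r.re / 2 < z.re}) (x₀ := r)
      ((isOpen_lt continuous_const Complex.continuous_re).mem_nhds (by simp; linarith))
      (Eventually.of_forall fun x => mlg_meas s x) (mlg_cint hs hr') ?_ ?_ (mlg_int (by linarith) (by linarith)) ?_
    · exact this.2.differentiableAt
    · apply Measurable.aestronglyMeasurable
      fun_prop
    · filter_upwards [ae_restrict_mem measurableSet_Ioi] with t ht z hz
      have ht' : (0 : ℝ) < t := ht
      have hz' : r.re / 2 < z.re := hz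
      rw [← mul_assoc, norm_mul, mlg_norm ht]
      simp only [one_mul, norm_neg, Complex.norm_real, Real.norm_eq_abs, abs_of_pos ht']
      have : t ^ (s + 1 - 1) = t ^ (s - 1) * t := by
        rw [show s + 1 - 1 = (s - 1) + 1 by ring, Real.rpow_add ht', Real.rpow_one]
      rw [this, mul_right_comm]
      gcongr
    · filter_upwards with t z hz
      exact (((hasDerivAt_id z).mul_const (t : ℂ)).neg.cexp).const_mul _
  have hG : DifferentiableOn ℂ (fun r : ℂ => Complex.exp (-(s * Complex.log r)) * Real.Gamma s) U := by
    intro r hr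
    have hr' : 0 < r.re := hr
    have : r ∈ Complex.slitPlane := Or.inl hr'
    refine DifferentiableAt.differentiableWithinAt ?_
    exact (((Complex.differentiableAt_log this).const_mul _).neg.cexp).mul_const _
  have hreal : ∀ x : ℝ, 0 < x → ∫ t in Set.Ioi (0 : ℝ), ((t ^ (s - 1) : ℝ) : ℂ) * Complex.exp (-((x : ℂ) * t)) =
      Complex.exp (-(s * Complex.log x)) * Real.Gamma s := by
    intro x hx
    have h1 := Real.integral_rpow_mul_exp_neg_mul_Ioi hs hx
    have h2 : ((∫ t in Set.Ioi (0 : ℝ), t ^ (s - 1) * Real.exp (-(x * t)) : ℝ) : ℂ) = (((1 / x) ^ s * Real.Gamma s : ℝ) : ℂ) := by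
      rw [h1]
    rw [← integral_complex_ofReal] at h2
    have e : ((((1 / x) ^ s * Real.Gamma s : ℝ)) : ℂ) = Complex.exp (-(s * Complex.log x)) * Real.Gamma s := by
      rw [← Complex.ofReal_log hx.le, one_div, Real.inv_rpow hx.le, Real.rpow_def_of_pos hx, ← Real.exp_neg]
      push_cast
      rw [mul_comm (Complex.ofReal (Real.log x))]
    rw [← e, ← h2]
    refine integral_congr_ae (Eventually.of_forall fun t => ?_)
    simp
  have := (hF.analyticOnNhd hUo).eqOn_of_preconnected_of_frequently_eq (hG.analyticOnNhd hUo) hUc (z₀ := ((1 : ℝ) : ℂ)) (by simp [hU]) ?_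
  · exact this hr
  · have h_real : ∃ᶠ (x : ℝ) in 𝓝[≠] 1, ∫ t in Set.Ioi (0 : ℝ), ((t ^ (s - 1) : ℝ) : ℂ) * Complex.exp (-((x : ℂ) * t)) =
      Complex.exp (-(s * Complex.log x)) * Real.Gamma s := by
      refine Eventually.frequently ?_
      have : ∀ᶠ x : ℝ in 𝓝[≠] 1, 0 < x := nhdsWithin_le_nhds (Ioi_mem_nhds one_pos)
      exact this.mono fun x hx => hreal x hx
    rw [frequently_iff_seq_forall] at h_real ⊢
    obtain ⟨xs, hx_tendsto, hx_eq⟩ := h_real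
    refine ⟨fun n => xs n, ?_, fun n => ?_⟩
    · rw [tendsto_nhdsWithin_iff] at hx_tendsto ⊢
      constructor
      · exact (Complex.continuous_ofReal.tendsto 1).comp hx_tendsto.1
      · simpa using hx_tendsto.2
    · exact hx_eq n

lemma mlb_beta {N : ℕ} {b ψ : ℝ} (hb : 0 < b) (hbN : b < N) (hψ0 : 0 < ψ) (hψ : ψ < Real.pi) :
    IntegrableOn (fun σ : ℝ => ((σ ^ (b - 1) : ℝ) : ℂ) * ((1 + Complex.exp (-(ψ * Complex.I)) * σ) ^ N)⁻¹) (Set.Ioi 0) ∧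
    ∫ σ in Set.Ioi (0 : ℝ), ((σ ^ (b - 1) : ℝ) : ℂ) * ((1 + Complex.exp (-(ψ * Complex.I)) * σ) ^ N)⁻¹ =
      Complex.exp (b * ψ * Complex.I) * ((Real.Gamma b * Real.Gamma (N - b) / Real.Gamma N : ℝ) : ℂ) := by
  have hN : (0 : ℝ) < N := by linarith
  set h : ℂ := Complex.exp (((ψ / 2 : ℝ) : ℂ) * Complex.I) with hh
  set h' : ℂ := Complex.exp (((-(ψ / 2) : ℝ) : ℂ) * Complex.I) with hh'
  set c : ℝ := Real.cos (ψ / 2) with hc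
  have hc0 : 0 < c := Real.cos_pos_of_mem_Ioo ⟨by linarith, by linarith⟩
  have hre : h.re = c := by rw [hh, Complex.exp_ofReal_mul_I_re]
  have hre' : h'.re = c := by rw [hh', Complex.exp_ofReal_mul_I_re, Real.cos_neg]
  have hlog : Complex.log h = ((ψ / 2 : ℝ) : ℂ) * Complex.I := by
    rw [hh, Complex.log_exp] <;> simp <;> linarith
  have hlog' : Complex.log h' = ((-(ψ / 2) : ℝ) : ℂ) * Complex.I := by
    rw [hh', Complex.log_exp] <;> simp <;> linarith
  have h'ne : h' ≠ 0 := Complex.exp_ne_zero _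
  have hne : h ≠ 0 := Complex.exp_ne_zero _
  -- the joint kernel
  set F : ℝ → ℝ → ℂ := fun τ σ => (((τ ^ ((N : ℝ) - 1) : ℝ) : ℂ) * Complex.exp (-(h * τ))) *
    (((σ ^ (b - 1) : ℝ) : ℂ) * Complex.exp (-(((τ : ℂ) * h') * σ))) with hF
  have hFn : ∀ τ σ : ℝ, 0 < τ → 0 < σ → ‖F τ σ‖ = (τ ^ ((N : ℝ) - 1) * Real.exp (-(c * τ))) * (σ ^ (b - 1) * Real.exp (-((τ * c) * σ))) := by
    intro τ σ hτ hσ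
    rw [hF]
    simp only
    rw [norm_mul, mlg_norm hτ, mlg_norm hσ, hre, Complex.re_ofReal_mul, hre']
  have hmeas : AEStronglyMeasurable (Function.uncurry F) ((volume.restrict (Set.Ioi (0 : ℝ))).prod (volume.restrict (Set.Ioi (0 : ℝ)))) := by
    apply Measurable.aestronglyMeasurable
    simp only [hF, Function.uncurry_def]
    fun_prop
  have hintg : Integrable (Function.uncurry F) ((volume.restrict (Set.Ioi (0 : ℝ))).prod (volume.restrict (Set.Ioi (0 : ℝ)))) := by
    rw [integrable_prod_iff hmeas]
    constructor
    · filter_upwards [ae_restrict_mem measurableSet_Ioi] with τ hτ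
      have hτ' : (0 : ℝ) < τ := hτ
      have hi := (mlg_cint hb (r := (τ : ℂ) * h') (by rw [Complex.re_ofReal_mul, hre']; positivity)).const_mul
        (((τ ^ ((N : ℝ) - 1) : ℝ) : ℂ) * Complex.exp (-(h * τ)))
      exact hi
    · have : IntegrableOn (fun τ : ℝ => (τ ^ (((N : ℝ) - b) - 1) * Real.exp (-(c * τ))) * ((1 / c) ^ b * Real.Gamma b)) (Set.Ioi 0) :=
        (mlg_int (by linarith) hc0).mul_const _
      refine Integrable.congr this ?_
      filter_upwards [ae_restrict_mem measurableSet_Ioi] with τ hτ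
      have hτ' : (0 : ℝ) < τ := hτ
      have e1 : ∫ σ in Set.Ioi (0 : ℝ), ‖Function.uncurry F (τ, σ)‖ =
          ∫ σ in Set.Ioi (0 : ℝ), (τ ^ ((N : ℝ) - 1) * Real.exp (-(c * τ))) * (σ ^ (b - 1) * Real.exp (-((τ * c) * σ))) :=
        setIntegral_congr_fun measurableSet_Ioi fun σ hσ => hFn τ σ hτ hσ
      rw [e1, integral_const_mul, Real.integral_rpow_mul_exp_neg_mul_Ioi hb (by positivity)]
      rw [show (N : ℝ) - b - 1 = ((N : ℝ) - 1) - b by ring, Real.rpow_sub hτ', one_div, one_div,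
        Real.inv_rpow (by positivity), Real.inv_rpow (by positivity), Real.mul_rpow hτ'.le hc0.le]
      have := (Real.rpow_pos_of_pos hτ' b).ne'
      have := (Real.rpow_pos_of_pos hc0 b).ne'
      field_simp
  -- inner τ integral
  have hin1 : ∀ σ : ℝ, 0 < σ → ∫ τ in Set.Ioi (0 : ℝ), F τ σ =
      (h⁻¹ ^ N * (Real.Gamma N : ℂ)) * (((σ ^ (b - 1) : ℝ) : ℂ) * ((1 + Complex.exp (-(ψ * Complex.I)) * σ) ^ N)⁻¹) := by
    intro σ hσ
    have e1 : ∀ τ : ℝ, F τ σ = ((σ ^ (b - 1) : ℝ) : ℂ) * (((τ ^ ((N : ℝ) - 1) : ℝ) : ℂ) * Complex.exp (-((h + h' * σ) * τ))) := by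
      intro τ
      simp only [hF]
      rw [show -((h + h' * σ) * (τ : ℂ)) = -(h * τ) + -((τ : ℂ) * h' * σ) by ring, Complex.exp_add]
      ring
    simp only [e1]
    have hrp : 0 < (h + h' * σ).re := by
      rw [Complex.add_re, mul_comm, Complex.re_ofReal_mul, hre, hre']; positivity
    rw [integral_const_mul, mlg_gamma hN hrp]
    have hrne : h + h' * σ ≠ 0 := by intro h0; rw [h0] at hrp; simp at hrp
    have e2 : Complex.exp (-((N : ℝ) * Complex.log (h + h' * σ))) = ((h + h' * σ) ^ N)⁻¹ := by
      rw [Complex.exp_neg]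
      push_cast
      rw [Complex.exp_nat_mul, Complex.exp_log hrne]
    have e3 : h + h' * σ = h * (1 + Complex.exp (-(ψ * Complex.I)) * σ) := by
      have : h' = h * Complex.exp (-(ψ * Complex.I)) := by
        rw [hh, hh', ← Complex.exp_add]; congr 1; push_cast; ring
      rw [this]; ring
    rw [e2, e3, mul_pow, mul_inv, inv_pow]
    ring
  have hin2 : ∀ τ : ℝ, 0 < τ → ∫ σ in Set.Ioi (0 : ℝ), F τ σ =
      (Complex.exp (b * (ψ / 2) * Complex.I) * Real.Gamma b) * (((τ ^ (((N : ℝ) - b) - 1) : ℝ) : ℂ) * Complex.exp (-(h * τ))) := by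
    intro τ hτ
    simp only [hF]
    have hrp : 0 < ((τ : ℂ) * h').re := by
      rw [Complex.re_ofReal_mul, hre']; positivity
    rw [integral_const_mul, mlg_gamma hb hrp, Complex.log_ofReal_mul hτ h'ne, hlog']
    have e : (((τ ^ (((N : ℝ) - b) - 1) : ℝ)) : ℂ) = ((τ ^ ((N : ℝ) - 1) : ℝ) : ℂ) * Complex.exp (-(b * Real.log τ)) := by
      rw [show (N : ℝ) - b - 1 = ((N : ℝ) - 1) + -b by ring, Real.rpow_add hτ, Real.rpow_def_of_pos hτ (-b)]
      push_cast
      congr 2; ring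
    rw [e, show -((b : ℂ) * (Real.log τ + ((-(ψ / 2) : ℝ) : ℂ) * Complex.I)) = -(b * Real.log τ) + b * (ψ / 2) * Complex.I by
      push_cast; ring, Complex.exp_add]
    ring
  have hsw := integral_integral_swap hintg
  have hL : ∫ τ in Set.Ioi (0 : ℝ), ∫ σ in Set.Ioi (0 : ℝ), F τ σ =
      (Complex.exp (b * (ψ / 2) * Complex.I) * Real.Gamma b) * (Complex.exp (-(((N : ℝ) - b : ℝ) * Complex.log h)) * Real.Gamma ((N : ℝ) - b)) := by
    rw [setIntegral_congr_fun measurableSet_Ioi fun τ hτ => hin2 τ hτ, integral_const_mul,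
      mlg_gamma (by linarith) (by rw [hre]; exact hc0)]
  have hR : ∫ σ in Set.Ioi (0 : ℝ), ∫ τ in Set.Ioi (0 : ℝ), F τ σ =
      (h⁻¹ ^ N * (Real.Gamma N : ℂ)) * ∫ σ in Set.Ioi (0 : ℝ), (((σ ^ (b - 1) : ℝ) : ℂ) * ((1 + Complex.exp (-(ψ * Complex.I)) * σ) ^ N)⁻¹) := by
    rw [setIntegral_congr_fun measurableSet_Ioi fun σ hσ => hin1 σ hσ, integral_const_mul]
  have hGN : (Real.Gamma N : ℂ) ≠ 0 := by
    exact_mod_cast (Real.Gamma_pos_of_pos hN).ne'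
  constructor
  · have h1 := hintg.integral_prod_right
    have h2 : IntegrableOn (fun σ : ℝ => (h⁻¹ ^ N * (Real.Gamma N : ℂ)) * (((σ ^ (b - 1) : ℝ) : ℂ) * ((1 + Complex.exp (-(ψ * Complex.I)) * σ) ^ N)⁻¹)) (Set.Ioi 0) := by
      refine Integrable.congr h1 ?_
      filter_upwards [ae_restrict_mem measurableSet_Ioi] with σ hσ
      exact hin1 σ hσ
    have h3 := h2.const_mul (h⁻¹ ^ N * (Real.Gamma N : ℂ))⁻¹
    refine h3.congr (Eventually.of_forall fun σ => ?_)
    have : h⁻¹ ^ N * (Real.Gamma N : ℂ) ≠ 0 := mul_ne_zero (pow_ne_zero _ (inv_ne_zero hne)) hGN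
    simp only
    rw [← mul_assoc, inv_mul_cancel₀ this, one_mul]
  · rw [hL, hR] at hsw
    have : h⁻¹ ^ N * (Real.Gamma N : ℂ) ≠ 0 := mul_ne_zero (pow_ne_zero _ (inv_ne_zero hne)) hGN
    refine mul_left_cancel₀ this ?_
    rw [← hsw, hlog]
    have e : h⁻¹ ^ N = Complex.exp (-((N : ℂ) * (ψ / 2) * Complex.I)) := by
      rw [hh, ← Complex.exp_neg, ← Complex.exp_nat_mul]; congr 1; push_cast; ring
    have e2 : Complex.exp (-((((N : ℝ) - b : ℝ) : ℂ) * (((ψ / 2 : ℝ) : ℂ) * Complex.I))) * Complex.exp (b * (ψ / 2) * Complex.I)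
        = Complex.exp (-((N : ℂ) * (ψ / 2) * Complex.I)) * Complex.exp (b * ψ * Complex.I) := by
      rw [← Complex.exp_add, ← Complex.exp_add]; congr 1; push_cast; ring
    rw [e]
    have e3 : ((Real.Gamma b * Real.Gamma (N - b) / Real.Gamma N : ℝ) : ℂ) * (Real.Gamma N : ℂ) =
        (Real.Gamma b : ℂ) * (Real.Gamma (N - b) : ℂ) := by
      rw [← Complex.ofReal_mul, ← Complex.ofReal_mul, div_mul_cancel₀ _ (Real.Gamma_pos_of_pos hN).ne']
    linear_combination ((Real.Gamma b : ℂ) * (Real.Gamma (N - b) : ℂ)) * e2 -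
      Complex.exp (-((N : ℂ) * (ψ / 2) * Complex.I)) * Complex.exp (b * ψ * Complex.I) * e3

lemma mlgp_int_zero (k : ℕ) : ∀ n : ℕ, k < n → mlgp (-((k : ℝ) + 1)) n = 0 := by
  intro n
  induction n with
  | zero => intro h; omega
  | succ n ih =>
    intro h
    rw [mlgp_succ]
    rcases Nat.lt_succ_iff_lt_or_eq.mp h with h | h
    · rw [ih h]; simp
    · subst h
      have : (k : ℝ) + 1 ≠ 0 := by positivity
      rw [neg_div, div_self this]; simp

lemma mlgp_refl {b : ℝ} (hs : Real.sin (Real.pi * b) ≠ 0) : ∀ n : ℕ,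
    Real.sin (Real.pi * b) * (Real.Gamma b * Real.Gamma ((n : ℝ) + 1 - b)) = Real.pi * (n.factorial * mlgp (-b) n) := by
  intro n
  induction n with
  | zero =>
    have := Real.Gamma_mul_Gamma_one_sub b
    simp only [CharP.cast_eq_zero, zero_add, this]
    simp [mlgp]
    field_simp
  | succ n ih =>
    have hne : (n : ℝ) + 1 - b ≠ 0 := by
      intro h0
      apply hs
      rw [show b = ((n + 1 : ℕ) : ℝ) by push_cast; linarith, mul_comm]
      exact Real.sin_nat_mul_pi _
    rw [show ((n + 1 : ℕ) : ℝ) + 1 - b = ((n : ℝ) + 1 - b) + 1 by push_cast; ring, Real.Gamma_add_one hne, mlgp_succ,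
      Nat.factorial_succ]
    push_cast
    have : (n : ℝ) + 1 ≠ 0 := by positivity
    field_simp
    linear_combination ((n : ℝ) + 1 - b) * ih

lemma mlgp_refl' {b : ℝ} {n : ℕ} (hb : 0 < b) (hbn : b < n + 1) :
    Real.sin (Real.pi * b) * (Real.Gamma b * Real.Gamma ((n : ℝ) + 1 - b)) = Real.pi * (n.factorial * mlgp (-b) n) := by
  by_cases hs : Real.sin (Real.pi * b) = 0
  · rw [hs]
    obtain ⟨k, hk⟩ := Real.sin_eq_zero_iff.mp hs
    have hk' : (k : ℝ) = b := by
      have := Real.pi_pos.ne'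
      field_simp at hk
      linarith
    have hk0 : 0 < k := by rw [← hk'] at hb; exact_mod_cast hb
    obtain ⟨l, rfl⟩ : ∃ l : ℕ, k = l + 1 := ⟨(k - 1).toNat, by omega⟩
    push_cast at hk'
    have hl : l < n := by
      have : (l : ℝ) < n := by linarith
      exact_mod_cast this
    rw [← hk', mlgp_int_zero l n hl]
    ring
  · exact mlgp_refl hs n

/-- the oscillating weight -/
noncomputable def mlP (ψ : ℝ) (N : ℕ) (σ : ℝ) : ℝ := (((1 + Complex.exp (-(ψ * Complex.I)) * σ) ^ N)⁻¹).im

lemma mlP_beta {n : ℕ} {b ψ : ℝ} (hb : 0 < b) (hbN : b < n + 1) (hψ0 : 0 < ψ) (hψ : ψ < Real.pi) :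
    IntegrableOn (fun σ : ℝ => mlP ψ (n + 1) σ * σ ^ (b - 1)) (Set.Ioi 0) ∧
    ∫ σ in Set.Ioi (0 : ℝ), mlP ψ (n + 1) σ * σ ^ (b - 1) =
      Real.sin (b * ψ) * (Real.Gamma b * Real.Gamma ((n : ℝ) + 1 - b)) / n.factorial := by
  obtain ⟨h1, h2⟩ := mlb_beta (N := n + 1) hb (by push_cast; exact hbN) hψ0 hψ
  have e : ∀ σ : ℝ, mlP ψ (n + 1) σ * σ ^ (b - 1) =
      (((σ ^ (b - 1) : ℝ) : ℂ) * ((1 + Complex.exp (-(ψ * Complex.I)) * σ) ^ (n + 1))⁻¹).im := by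
    intro σ
    rw [Complex.im_ofReal_mul, mlP]; ring
  simp only [e]
  refine ⟨h1.im, ?_⟩
  have h3 := integral_im (𝕜 := ℂ) h1
  refine h3.trans ?_
  rw [h2, mul_comm]
  change (_ : ℂ).im = _
  rw [Complex.im_ofReal_mul]
  have : (Complex.exp (b * ψ * Complex.I)).im = Real.sin (b * ψ) := by
    rw [← Complex.ofReal_mul, Complex.exp_ofReal_mul_I_im]
  rw [this]
  push_cast
  rw [Real.Gamma_nat_eq_factorial]
  ring

lemma mlP_moment {a : ℝ} (h0 : 1 / 2 < a) (h1 : a < 1) {n i : ℕ} (hi : a * (i + 1) < n + 1) :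
    IntegrableOn (fun σ : ℝ => mlP (Real.pi / a - Real.pi) (n + 1) σ * σ ^ (a * (i + 1) - 1)) (Set.Ioi 0) ∧
    ∫ σ in Set.Ioi (0 : ℝ), mlP (Real.pi / a - Real.pi) (n + 1) σ * σ ^ (a * (i + 1) - 1) =
      Real.pi * ((-1) ^ i * mlgp (-(a * (i + 1))) n) := by
  have hpi := Real.pi_pos
  have ha : 0 < a := by linarith
  have hψ0 : 0 < Real.pi / a - Real.pi := by
    rw [sub_pos, lt_div_iff₀ ha]; nlinarith
  have hψ1 : Real.pi / a - Real.pi < Real.pi := by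
    rw [sub_lt_iff_lt_add, div_lt_iff₀ ha]; nlinarith
  have hb : 0 < a * ((i : ℝ) + 1) := by positivity
  obtain ⟨h2, h3⟩ := mlP_beta hb hi hψ0 hψ1
  refine ⟨h2, ?_⟩
  rw [h3]
  have e1 : Real.sin (a * (i + 1) * (Real.pi / a - Real.pi)) = (-1) ^ i * Real.sin (Real.pi * (a * (i + 1))) := by
    rw [show a * ((i : ℝ) + 1) * (Real.pi / a - Real.pi) = ((i + 1 : ℕ) : ℝ) * Real.pi - Real.pi * (a * (i + 1)) by
      push_cast; field_simp, Real.sin_nat_mul_pi_sub]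
    ring
  have := mlgp_refl' hb hi
  rw [e1, mul_assoc, this]
  have : (n.factorial : ℝ) ≠ 0 := by positivity
  field_simp

/-- representation of a sequence by moments -/
def MlRep (w u g : ℝ → ℝ) (Y : ℕ → ℝ) (D : ℤ) : Prop := ∀ j : ℕ, (j : ℤ) ≤ D →
  IntegrableOn (fun σ => w σ * u σ ^ j * g σ) (Set.Ioi 0) ∧
  ∫ σ in Set.Ioi (0 : ℝ), w σ * u σ ^ j * g σ = Y j

lemma MlRep.step {w u g : ℝ → ℝ} {Y : ℕ → ℝ} {D : ℤ} (h : MlRep w u g Y D) (p q : ℝ) :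
    MlRep w u (fun σ => g σ * (p * u σ + q)) (fun j => p * Y (j + 1) + q * Y j) (D - 1) := by
  intro j hj
  obtain ⟨i1, e1⟩ := h j (by omega)
  obtain ⟨i2, e2⟩ := h (j + 1) (by push_cast; omega)
  have e : ∀ σ, w σ * u σ ^ j * (g σ * (p * u σ + q)) = p * (w σ * u σ ^ (j + 1) * g σ) + q * (w σ * u σ ^ j * g σ) := by
    intro σ; ring
  simp only [e]
  refine ⟨(i2.const_mul p).add (i1.const_mul q), ?_⟩
  rw [integral_add (i2.const_mul p) (i1.const_mul q), integral_const_mul, integral_const_mul, e1, e2]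

lemma mlRep_q {a : ℝ} (h0 : 1 / 2 < a) (h1 : a < 1) {n : ℕ} {D : ℤ} (hD : a * (D + 1) < n + 1) :
    MlRep (fun σ => mlP (Real.pi / a - Real.pi) (n + 1) σ * σ ^ (a - 1)) (fun σ => 1 + σ ^ a) (fun _ => 1)
      (fun j => Real.pi * mlq a n j) D := by
  have ha : 0 < a := by linarith
  intro j hj
  have hjD : (j : ℝ) ≤ D := by exact_mod_cast hj
  have hm : ∀ i ∈ Finset.range (j + 1), a * ((i : ℝ) + 1) < n + 1 := by
    intro i hi
    have : (i : ℝ) ≤ j := by exact_mod_cast Nat.lt_succ_iff.mp (Finset.mem_range.mp hi)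
    refine lt_of_le_of_lt ?_ hD
    gcongr
    linarith
  have e : Set.EqOn (fun σ : ℝ => mlP (Real.pi / a - Real.pi) (n + 1) σ * σ ^ (a - 1) * (1 + σ ^ a) ^ j * 1)
     (fun σ : ℝ => ∑ i ∈ Finset.range (j + 1), (j.choose i : ℝ) * (mlP (Real.pi / a - Real.pi) (n + 1) σ * σ ^ (a * (i + 1) - 1))) (Set.Ioi 0) := by
    intro σ hσ
    have hσ' : 0 < σ := hσ
    simp only
    rw [add_comm (1 : ℝ), add_pow, Finset.mul_sum, Finset.sum_mul]
    refine Finset.sum_congr rfl fun i hi => ?_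
    rw [show a * ((i : ℝ) + 1) - 1 = (a - 1) + a * i by ring, Real.rpow_add hσ', Real.rpow_mul hσ'.le, Real.rpow_natCast]
    simp only [one_pow]
    ring
  have hintg : ∀ i ∈ Finset.range (j + 1), IntegrableOn (fun σ : ℝ => (j.choose i : ℝ) * (mlP (Real.pi / a - Real.pi) (n + 1) σ * σ ^ (a * (i + 1) - 1))) (Set.Ioi 0) :=
    fun i hi => (mlP_moment h0 h1 (hm i hi)).1.const_mul _
  constructor
  · refine IntegrableOn.congr_fun ?_ e.symm measurableSet_Ioi
    exact integrable_finsetSum _ hintg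
  · rw [setIntegral_congr_fun measurableSet_Ioi e, integral_finsetSum _ hintg]
    simp only
    rw [mlq_eq_sum, Finset.mul_sum]
    refine Finset.sum_congr rfl fun i hi => ?_
    rw [integral_const_mul, (mlP_moment h0 h1 (hm i hi)).2]
    ring

lemma mlsin_prod (m : ℕ) : ∀ x : ℝ, 0 ≤ x → x ≤ m + 1 →
    0 ≤ (-1) ^ m * Real.sin (Real.pi * x) * ∏ k ∈ Finset.range m, (x - (k + 1)) := by
  induction m with
  | zero =>
    intro x h0 h1
    simp at h1 ⊢
    exact Real.sin_nonneg_of_nonneg_of_le_pi (by positivity) (by nlinarith [Real.pi_pos])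
  | succ m ih =>
    intro x h0 h1
    push_cast at h1
    rcases le_total x (m + 1) with h | h
    · have := ih x h0 h
      rw [Finset.prod_range_succ]
      have h2 := mul_nonneg this (by linarith : 0 ≤ ((m : ℝ) + 1) - x)
      refine h2.trans_eq ?_
      ring
    · refine mul_nonneg ?_ (Finset.prod_nonneg fun k hk => ?_)
      · have : Real.sin (Real.pi * x - ((m + 1 : ℕ) : ℝ) * Real.pi) = (-1) ^ (m + 1) * Real.sin (Real.pi * x) := by
          rw [Real.sin_sub_nat_mul_pi]
        rw [← this]
        push_cast
        have hp := Real.pi_pos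
        exact Real.sin_nonneg_of_nonneg_of_le_pi (by nlinarith) (by nlinarith)
      · have : k < m + 1 := Finset.mem_range.mp hk
        have : (k : ℝ) + 1 ≤ m + 1 := by exact_mod_cast this
        linarith

lemma mlsin_sign {y : ℝ} (h0 : -Real.pi < y) (h1 : y < Real.pi) : (0 < Real.sin y → 0 < y) ∧ (Real.sin y < 0 → y < 0) := by
  constructor
  · intro h
    by_contra hn
    exact absurd (Real.sin_nonpos_of_nonpos_of_neg_pi_le (not_lt.mp hn) h0.le) (not_le.mpr h)
  · intro h
    by_contra hn
    exact absurd (Real.sin_nonneg_of_nonneg_of_le_pi (not_lt.mp hn) h1.le) (not_le.mpr h)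

lemma mlP_polar {ψ σ : ℝ} (hψ0 : 0 < ψ) (hψ : ψ < Real.pi) (hσ : 0 < σ) :
    ∃ r ϑ : ℝ, 0 < r ∧ 0 < ϑ ∧ ϑ < ψ ∧ (∀ N : ℕ, mlP ψ N σ = (r ^ N)⁻¹ * Real.sin (N * ϑ)) ∧
      ∀ θ : ℝ, Real.sin θ - σ * Real.sin (ψ - θ) = r * Real.sin (θ - ϑ) := by
  set z : ℂ := 1 + Complex.exp (-(ψ * Complex.I)) * σ with hz
  have hE : Complex.exp (-(ψ * Complex.I)) = ((Real.cos ψ : ℝ) : ℂ) - (Real.sin ψ : ℝ) * Complex.I := by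
    rw [show -((ψ : ℂ) * Complex.I) = ((-ψ : ℝ) : ℂ) * Complex.I by push_cast; ring, Complex.exp_mul_I,
      ← Complex.ofReal_cos, ← Complex.ofReal_sin, Real.cos_neg, Real.sin_neg]
    push_cast; ring
  have hre : z.re = 1 + σ * Real.cos ψ := by rw [hz, hE]; simp [-Complex.ofReal_cos, -Complex.ofReal_sin]; ring
  have him : z.im = -(σ * Real.sin ψ) := by rw [hz, hE]; simp [-Complex.ofReal_cos, -Complex.ofReal_sin]; ring
  have hs : 0 < Real.sin ψ := Real.sin_pos_of_pos_of_lt_pi hψ0 hψ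
  have himn : z.im < 0 := by rw [him]; have := mul_pos hσ hs; linarith
  have hzne : z ≠ 0 := by intro h; rw [h] at himn; simp at himn
  have hr : 0 < ‖z‖ := norm_pos_iff.mpr hzne
  have harg0 : Complex.arg z < 0 := Complex.arg_neg_iff.mpr himn
  have harg1 := Complex.neg_pi_lt_arg z
  have hid : ∀ θ : ℝ, Real.sin θ - σ * Real.sin (ψ - θ) = ‖z‖ * Real.sin (θ - -Complex.arg z) := by
    intro θ
    have h1 : ‖z‖ * Real.cos (Complex.arg z) = z.re := Complex.norm_mul_cos_arg z
    have h2 : ‖z‖ * Real.sin (Complex.arg z) = z.im := Complex.norm_mul_sin_arg z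
    rw [sub_neg_eq_add, Real.sin_add, Real.sin_sub]
    rw [hre] at h1
    rw [him] at h2
    linear_combination (-Real.sin θ) * h1 - Real.cos θ * h2
  have hϑψ : -Complex.arg z < ψ := by
    have := hid ψ
    simp only [sub_self, Real.sin_zero, mul_zero, sub_zero] at this
    have h3 : 0 < Real.sin (ψ - -Complex.arg z) := by
      by_contra hn
      have := mul_nonpos_of_nonneg_of_nonpos hr.le (not_lt.mp hn)
      linarith
    have := (mlsin_sign (by linarith) (by linarith)).1 h3
    linarith
  refine ⟨‖z‖, -Complex.arg z, hr, by linarith, hϑψ, ?_, hid⟩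
  intro N
  rw [mlP, ← hz]
  conv_lhs => rw [← Complex.norm_mul_exp_arg_mul_I z]
  rw [mul_pow, mul_inv, ← Complex.exp_nat_mul, ← Complex.exp_neg, ← Complex.ofReal_pow, ← Complex.ofReal_inv,
    Complex.im_ofReal_mul]
  congr 1
  rw [show -((N : ℂ) * (Complex.arg z * Complex.I)) = ((N * -Complex.arg z : ℝ) : ℂ) * Complex.I by push_cast; ring,
    Complex.exp_ofReal_mul_I_im]

lemma mlP_sign {ψ a : ℝ} {N m : ℕ} (ha : 0 < a) (hN : 0 < N) (hψ0 : 0 < ψ) (hψ : ψ < Real.pi)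
    (hm0 : m * Real.pi < N * ψ) (hm1 : N * ψ ≤ (m + 1) * Real.pi) :
    ∃ U : ℕ → ℝ, (∀ k, k < m → 0 < U k) ∧ ∀ σ : ℝ, 0 < σ →
      0 ≤ (-1) ^ m * mlP ψ N σ * ∏ k ∈ Finset.range m, (1 + σ ^ a - U k) := by
  have hp := Real.pi_pos
  have hN' : (0 : ℝ) < N := by exact_mod_cast hN
  set θ : ℕ → ℝ := fun k => (k + 1) * Real.pi / N with hθ
  have hθ0 : ∀ k, 0 < θ k := fun k => by simp only [hθ]; positivity
  have hθψ : ∀ k, k < m → θ k < ψ := by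
    intro k hk
    have : (k : ℝ) + 1 ≤ m := by exact_mod_cast hk
    simp only [hθ]
    rw [div_lt_iff₀ hN']
    nlinarith
  set S : ℕ → ℝ := fun k => Real.sin (θ k) / Real.sin (ψ - θ k) with hS
  have hd : ∀ k, k < m → 0 < Real.sin (ψ - θ k) := fun k hk =>
    Real.sin_pos_of_pos_of_lt_pi (by linarith [hθψ k hk]) (by linarith [hθ0 k])
  have hS0 : ∀ k, k < m → 0 < S k := fun k hk =>
    div_pos (Real.sin_pos_of_pos_of_lt_pi (hθ0 k) (by linarith [hθψ k hk])) (hd k hk)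
  refine ⟨fun k => 1 + S k ^ a, fun k hk => ?_, ?_⟩
  · have := Real.rpow_pos_of_pos (hS0 k hk) a
    linarith
  intro σ hσ
  obtain ⟨r, ϑ, hr, hϑ0, hϑ, hP, hid⟩ := mlP_polar hψ0 hψ hσ
  set x : ℝ := N * ϑ / Real.pi with hx
  have hx0 : 0 ≤ x := by positivity
  have hx1 : x ≤ m + 1 := by
    rw [hx, div_le_iff₀ hp]; nlinarith
  have hxN : Real.pi * x = N * ϑ := by rw [hx]; field_simp
  have key : ∀ k ∈ Finset.range m, 1 + σ ^ a - (1 + S k ^ a) =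
      ((1 + σ ^ a - (1 + S k ^ a)) / (x - (k + 1))) * (x - (k + 1)) ∧
      0 ≤ ((1 + σ ^ a - (1 + S k ^ a)) / (x - (k + 1))) := by
    intro k hk
    have hk := Finset.mem_range.mp hk
    have h1 := hid (θ k)
    have h2 : Real.sin (θ k) = S k * Real.sin (ψ - θ k) := by
      simp only [hS]; rw [div_mul_cancel₀ _ (hd k hk).ne']
    rw [h2, ← sub_mul] at h1
    have hxk : x - (k + 1) = (ϑ - θ k) * (N / Real.pi) := by
      simp only [hx, hθ]; field_simp
    have hNp : 0 < (N : ℝ) / Real.pi := by positivity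
    have hs := mlsin_sign (y := θ k - ϑ) (by linarith [hθ0 k]) (by linarith [hθψ k hk])
    rcases lt_trichotomy σ (S k) with h | h | h
    · have h3 : 0 < r * Real.sin (θ k - ϑ) := by rw [← h1]; exact mul_pos (by linarith) (hd k hk)
      have h4 := hs.1 (pos_of_mul_pos_right h3 hr.le)
      have h5 : x - (k + 1) < 0 := by rw [hxk]; exact mul_neg_of_neg_of_pos (by linarith) hNp
      have h6 : σ ^ a < S k ^ a := Real.rpow_lt_rpow hσ.le h ha
      exact ⟨(div_mul_cancel₀ _ h5.ne).symm, div_nonneg_of_nonpos (by linarith) h5.le⟩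
    · rw [← h]; simp
    · have h3 : r * Real.sin (θ k - ϑ) < 0 := by rw [← h1]; exact mul_neg_of_neg_of_pos (by linarith) (hd k hk)
      have h4 := hs.2 (by by_contra hn; exact absurd (mul_nonneg hr.le (not_lt.mp hn)) (not_le.mpr h3))
      have h5 : 0 < x - (k + 1) := by rw [hxk]; exact mul_pos (by linarith) hNp
      have h6 : S k ^ a < σ ^ a := Real.rpow_lt_rpow (hS0 k hk).le h ha
      exact ⟨(div_mul_cancel₀ _ h5.ne').symm, div_nonneg (by linarith) h5.le⟩
  rw [Finset.prod_congr rfl fun k hk => (key k hk).1, Finset.prod_mul_distrib, hP, ← hxN]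
  have h7 := mlsin_prod m x hx0 hx1
  have h8 : 0 ≤ ∏ k ∈ Finset.range m, ((1 + σ ^ a - (1 + S k ^ a)) / (x - (k + 1))) :=
    Finset.prod_nonneg fun k hk => (key k hk).2
  have h9 : 0 ≤ (r ^ N)⁻¹ := by positivity
  refine (mul_nonneg (mul_nonneg h9 h8) h7).trans_eq ?_
  ring

lemma ml_gap {Y : ℕ → ℝ} {u : ℝ} (hu : 0 < u) {a b : ℕ} (hab : a < b) (ha : Y a < 0) (hb : 0 ≤ Y b) :
    ∃ j, a ≤ j ∧ j < b ∧ 0 < Y (j + 1) - u * Y j := by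
  by_contra hn
  push Not at hn
  have : ∀ j, a ≤ j → j ≤ b → Y j < 0 := by
    intro j hj
    induction j, hj using Nat.le_induction with
    | base => intro _; exact ha
    | succ j hj ih =>
      intro hjb
      have h1 := ih (by omega)
      have h2 := hn j hj (by omega)
      have := mul_neg_of_pos_of_neg hu h1
      linarith
  exact absurd (this b hab.le le_rfl) (not_lt.mpr hb)

def MlAlt (n : ℕ) (ε : ℝ) (Y : ℕ → ℝ) : Prop := (∀ j, n < j → Y j = 0) ∧
  ∃ a b c d : ℕ, a < b ∧ b < c ∧ c < d ∧ d ≤ n ∧ ε * Y a < 0 ∧ 0 < ε * Y b ∧ ε * Y c < 0 ∧ 0 < ε * Y d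

lemma MlAlt.step {n : ℕ} {ε : ℝ} {Y : ℕ → ℝ} (h : MlAlt n ε Y) {u : ℝ} (hu : 0 < u) :
    MlAlt n (-ε) (fun j => 1 * Y (j + 1) + (-u) * Y j) := by
  obtain ⟨hz, a, b, c, d, hab, hbc, hcd, hdn, h1, h2, h3, h4⟩ := h
  refine ⟨fun j hj => by simp only; rw [hz j hj, hz (j + 1) (by omega)]; ring, ?_⟩
  obtain ⟨a', i1, i2, i3⟩ := ml_gap (Y := fun j => ε * Y j) hu hab h1 h2.le
  obtain ⟨b', j1, j2, j3⟩ := ml_gap (Y := fun j => -(ε * Y j)) hu hbc (by linarith) (by linarith)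
  obtain ⟨c', k1, k2, k3⟩ := ml_gap (Y := fun j => ε * Y j) hu hcd h3 h4.le
  obtain ⟨d', l1, l2, l3⟩ := ml_gap (Y := fun j => -(ε * Y j)) hu (show d < n + 1 by omega) (by linarith)
    (by rw [hz (n + 1) (by omega)]; simp)
  refine ⟨a', b', c', d', by omega, by omega, by omega, by omega, ?_, ?_, ?_, ?_⟩ <;> simp only at * <;> linarith

lemma ml_iter {w u g : ℝ → ℝ} {n : ℕ} {D : ℤ} (U : ℕ → ℝ) : ∀ m : ℕ, (∀ k, k < m → 0 < U k) →
    ∀ Y : ℕ → ℝ, MlRep w u g Y D → MlAlt n 1 Y →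
    ∃ Z : ℕ → ℝ, MlRep w u (fun σ => g σ * ∏ k ∈ Finset.range m, (1 * u σ + (-U k))) Z (D - m) ∧ MlAlt n ((-1) ^ m) Z := by
  intro m
  induction m with
  | zero =>
    intro _ Y h1 h2
    exact ⟨Y, by simpa using h1, by simpa using h2⟩
  | succ m ih =>
    intro hU Y h1 h2
    obtain ⟨Z, h3, h4⟩ := ih (fun k hk => hU k (by omega)) Y h1 h2
    refine ⟨fun j => 1 * Z (j + 1) + (-U m) * Z j, ?_, ?_⟩
    rotate_left
    · have := h4.step (hU m (by omega))
      rw [show (-1 : ℝ) ^ (m + 1) = -(-1) ^ m by ring]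
      exact this
    · have := h3.step 1 (-U m)
      simp only [Finset.prod_range_succ, ← mul_assoc]
      push_cast
      rw [show D - ((m : ℤ) + 1) = D - m - 1 by ring]
      exact this

theorem mlLC_of_delta {a : ℝ} (h0 : 1 / 2 < a) (h1 : a < 1) (n : ℕ)
    (hd : mlq a n 0 * mlq a n 2 < mlq a n 1 ^ 2) : MlLC a n := by
  have ha : 0 < a := by linarith
  have hp := Real.pi_pos
  by_contra hLC
  unfold MlLC at hLC
  push Not at hLC
  classical
  have hqp : ∀ j, j ≤ n → 0 < mlq a n j := mlq_pos ha h1 n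
  set j0 := Nat.find hLC with hj0
  have hf : mlq a n (j0 + 1) ^ 2 < mlq a n j0 * mlq a n (j0 + 2) := Nat.find_spec hLC
  have hmin : ∀ j, j < j0 → mlq a n j * mlq a n (j + 2) ≤ mlq a n (j + 1) ^ 2 := fun j hj =>
    not_lt.mp (Nat.find_min hLC hj)
  have hj1 : 1 ≤ j0 := by
    by_contra hn
    have : j0 = 0 := by omega
    rw [this] at hf
    exact absurd hf (not_lt.mpr hd.le)
  have hjn : j0 + 2 ≤ n := by
    by_contra hn
    rw [mlq_support a n (j0 + 2) (by omega), mul_zero] at hf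
    exact absurd hf (not_lt.mpr (sq_nonneg _))
  set r : ℕ → ℝ := fun j => mlq a n (j + 1) / mlq a n j with hr
  have hr1 : ∀ j, 1 ≤ j → j ≤ j0 → r j < r 0 := by
    intro j hj
    induction j, hj using Nat.le_induction with
    | base =>
      intro _
      simp only [hr]
      rw [div_lt_div_iff₀ (hqp 1 (by omega)) (hqp 0 (by omega))]
      simpa [sq, mul_comm] using hd
    | succ j hj ih =>
      intro hjj
      refine lt_of_le_of_lt ?_ (ih (by omega))
      simp only [hr]
      rw [div_le_div_iff₀ (hqp (j + 1) (by omega)) (hqp j (by omega))]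
      have := hmin j (by omega)
      simpa [sq, mul_comm] using this
  have hr2 : r j0 < r (j0 + 1) := by
    simp only [hr]
    rw [div_lt_div_iff₀ (hqp j0 (by omega)) (hqp (j0 + 1) (by omega))]
    simpa [sq, mul_comm] using hf
  obtain ⟨v, hv1, hv2⟩ := exists_between (lt_min (hr1 j0 hj1 le_rfl) hr2)
  have hv3 := lt_of_lt_of_le hv2 (min_le_left _ _)
  have hv4 := lt_of_lt_of_le hv2 (min_le_right _ _)
  have hv0 : 0 < v := lt_trans (div_pos (hqp _ (by omega)) (hqp _ (by omega))) hv1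
  simp only [hr] at hv1 hv3 hv4
  rw [div_lt_iff₀ (hqp _ (by omega))] at hv1
  rw [lt_div_iff₀ (hqp _ (by omega))] at hv3 hv4
  -- the number of sign changes
  set N := n + 1 with hN
  set ψ := Real.pi / a - Real.pi with hψ
  have hψ0 : 0 < ψ := by
    rw [hψ, sub_pos, lt_div_iff₀ ha]; nlinarith
  have hψ1 : ψ < Real.pi := by
    rw [hψ, sub_lt_iff_lt_add, div_lt_iff₀ ha]; nlinarith
  have hNr : (0 : ℝ) < N := by rw [hN]; positivity
  set x := (N : ℝ) * ψ / Real.pi with hx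
  have hx0 : 0 < x := by positivity
  obtain ⟨m, hm0, hm1⟩ : ∃ m : ℕ, (m : ℝ) < x ∧ x ≤ m + 1 := by
    have h2 : 0 < ⌈x⌉₊ := Nat.ceil_pos.mpr hx0
    refine ⟨⌈x⌉₊ - 1, ?_, ?_⟩
    · exact Nat.lt_ceil.mp (by omega)
    · have := Nat.le_ceil x
      rwa [Nat.cast_sub (by omega), Nat.cast_one, sub_add_cancel]
  have hxp : x * Real.pi = N * ψ := by rw [hx]; field_simp
  obtain ⟨U, hU, hsign⟩ := mlP_sign (a := a) (N := N) (m := m) ha (by omega) hψ0 hψ1 (by rw [← hxp]; gcongr) (by rw [← hxp]; gcongr)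
  have hrep := mlRep_q h0 h1 (n := n) (D := (n : ℤ) + m) (by
    have : x = N / a - N := by rw [hx, hψ]; field_simp
    have h3 : (N : ℝ) + m < N / a := by linarith
    rw [lt_div_iff₀ ha] at h3
    push_cast [hN] at h3 ⊢
    linarith)
  have hrep1 := hrep.step (-(1 / v)) 1
  have hvv : v * (1 / v) = 1 := by field_simp
  have hvi : 0 < 1 / v := by positivity
  have halt : MlAlt n 1 (fun j => -(1 / v) * (Real.pi * mlq a n (j + 1)) + 1 * (Real.pi * mlq a n j)) := by
    have e : ∀ j, 1 * (-(1 / v) * (Real.pi * mlq a n (j + 1)) + 1 * (Real.pi * mlq a n j)) =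
      Real.pi * (1 / v) * (v * mlq a n j - mlq a n (j + 1)) := by
      intro j; field_simp; ring
    have hpv : 0 < Real.pi * (1 / v) := by positivity
    refine ⟨fun j hj => by simp only; rw [mlq_support a n j hj, mlq_support a n (j + 1) (by omega)]; ring,
      0, j0, j0 + 1, n, by omega, by omega, by omega, le_rfl, ?_, ?_, ?_, ?_⟩ <;> simp only [e]
    · exact mul_neg_of_pos_of_neg hpv (by linarith)
    · exact mul_pos hpv (by linarith)
    · exact mul_neg_of_pos_of_neg hpv (by linarith)
    · rw [mlq_support a n (n + 1) (by omega)]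
      exact mul_pos hpv (by have := mul_pos hv0 (hqp n le_rfl); linarith)
  obtain ⟨Z, hZ1, hZ2⟩ := ml_iter U m hU _ hrep1 halt
  have hS := hZ1.step 1 (-v)
  have hSneg : ∀ j : ℕ, j + 2 ≤ n → (-1) ^ m * (1 * Z (j + 1) + (-v) * Z j) ≤ 0 := by
    intro j hj
    have := (hS j (by omega)).2
    beta_reduce at this
    rw [← this, ← integral_const_mul]
    refine setIntegral_nonpos measurableSet_Ioi fun σ hσ => ?_
    have hσ' : 0 < σ := hσ
    have h5 := hsign σ hσ'
    have h6 : ∏ k ∈ Finset.range m, (1 + σ ^ a - U k) = ∏ k ∈ Finset.range m, (1 * (1 + σ ^ a) + -U k) :=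
      Finset.prod_congr rfl fun k _ => by ring
    rw [h6] at h5
    have h7 : 0 ≤ σ ^ (a - 1) * (1 + σ ^ a) ^ j * ((1 / v) * ((1 + σ ^ a) - v) ^ 2) := by positivity
    have h8 := mul_nonneg h7 h5
    have h9 : (-1) ^ m * (mlP ψ N σ * σ ^ (a - 1) * (1 + σ ^ a) ^ j *
      (1 * (-(1 / v) * (1 + σ ^ a) + 1) * (∏ k ∈ Finset.range m, (1 * (1 + σ ^ a) + -U k)) * (1 * (1 + σ ^ a) + -v)))
      = -(σ ^ (a - 1) * (1 + σ ^ a) ^ j * (1 / v * (1 + σ ^ a - v) ^ 2) *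
      ((-1) ^ m * mlP ψ N σ * ∏ k ∈ Finset.range m, (1 * (1 + σ ^ a) + -U k))) := by
      have : -(1 / v) * (1 + σ ^ a) + 1 = -(1 / v) * (1 + σ ^ a - v) := by linear_combination (-1 : ℝ) * hvv
      rw [this]; ring
    refine le_of_eq_of_le h9 ?_
    linarith
  obtain ⟨hz, a', b', c', d', hab, hbc, hcd, hdn, g1, g2, g3, g4⟩ := hZ2
  obtain ⟨i, i1, i2, i3⟩ := ml_gap (Y := fun j => (-1) ^ m * Z j) hv0 hab g1 g2.le
  have := hSneg i (by omega)
  linarith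

lemma mlLC_eventually {a : ℝ} (h0 : 1 / 2 < a) (h1 : a < 1)
    (hG : 1 / (Real.Gamma (1 - a) * Real.Gamma (1 - 3 * a)) < 1 / Real.Gamma (1 - 2 * a) ^ 2) :
    ∀ᶠ n in atTop, MlLC a n := by
  have t1 := mlgp_tendsto (-a)
  have t2 := mlgp_tendsto (-(2 * a))
  have t3 := mlgp_tendsto (-(3 * a))
  have t := (t2.pow 2).sub (t1.mul t3)
  simp only [← sub_eq_add_neg] at t
  have hpos : 0 < (1 / Real.Gamma (1 - 2 * a)) ^ 2 - 1 / Real.Gamma (1 - a) * (1 / Real.Gamma (1 - 3 * a)) := by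
    rw [one_div_mul_one_div, one_div_pow]; linarith
  filter_upwards [t.eventually (lt_mem_nhds hpos), eventually_gt_atTop 0] with n hn hn0
  apply mlLC_of_delta h0 h1
  have hn' : (0 : ℝ) < n := by exact_mod_cast hn0
  have e : (mlgp (-(2 * a)) n * (n : ℝ) ^ (-(-(2 * a)))) ^ 2 - mlgp (-a) n * (n : ℝ) ^ (-(-a)) * (mlgp (-(3 * a)) n * (n : ℝ) ^ (-(-(3 * a))))
     = (n : ℝ) ^ (4 * a) * (mlgp (-(2 * a)) n ^ 2 - mlgp (-a) n * mlgp (-(3 * a)) n) := by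
    simp only [neg_neg]
    have e1 : ((n : ℝ) ^ (2 * a)) ^ 2 = (n : ℝ) ^ (4 * a) := by
      rw [← Real.rpow_natCast, ← Real.rpow_mul hn'.le]; congr 1; push_cast; ring
    have e2 : (n : ℝ) ^ a * (n : ℝ) ^ (3 * a) = (n : ℝ) ^ (4 * a) := by
      rw [← Real.rpow_add hn']; congr 1; ring
    rw [mul_pow, e1]
    linear_combination (-(mlgp (-a) n * mlgp (-(3 * a)) n)) * e2
  rw [e, ← mlq_delta1] at hn
  have := pos_of_mul_pos_right hn (by positivity)
  linarith

lemma mlRC_of_G {a : ℝ} (h0 : 1 / 2 < a) (h1 : a < 1)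
    (hG : 1 / (Real.Gamma (1 - a) * Real.Gamma (1 - 3 * a)) < 1 / Real.Gamma (1 - 2 * a) ^ 2) :
    MlRC (fun t => mittagLeffler a 1 (-t)) :=
  mlRC_of_LC (by linarith) h1 (mlLC_eventually h0 h1 hG)

lemma ml_abel {n : ℕ} {v y : ℝ} (hv : v * (1 + y) = 1) (a : ℝ) (m : ℕ) :
    ∑ j ∈ Finset.range (n + 1), mld a (m + 1) n j * v ^ (j + 1) =
      mld a m n 0 - y * ∑ j ∈ Finset.range (n + 1), mld a m n j * v ^ (j + 1) := by
  have h1 : ∑ j ∈ Finset.range (n + 1), mld a m n j * v ^ j =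
      (1 + y) * ∑ j ∈ Finset.range (n + 1), mld a m n j * v ^ (j + 1) := by
    rw [Finset.mul_sum]
    refine Finset.sum_congr rfl fun j _ => ?_
    linear_combination (-(mld a m n j * v ^ j)) * hv
  have h2 : ∑ j ∈ Finset.range (n + 1), mld a m n (j + 1) * v ^ (j + 1) + mld a m n 0 =
      ∑ j ∈ Finset.range (n + 1), mld a m n j * v ^ j := by
    have e := Finset.sum_range_succ' (fun j => mld a m n j * v ^ j) (n + 1)
    have e' := Finset.sum_range_succ (fun j => mld a m n j * v ^ j) (n + 1)
    rw [mld_support a m n (n + 1) (by omega)] at e'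
    simp only [pow_zero, mul_one] at e
    linarith
  have h3 : ∑ j ∈ Finset.range (n + 1), mld a (m + 1) n j * v ^ (j + 1) =
      ∑ j ∈ Finset.range (n + 1), mld a m n j * v ^ (j + 1) - ∑ j ∈ Finset.range (n + 1), mld a m n (j + 1) * v ^ (j + 1) := by
    rw [← Finset.sum_sub_distrib]
    refine Finset.sum_congr rfl fun j _ => ?_
    simp only [mld]; ring
  rw [h3]
  linarith

lemma mlQ_expand {a : ℝ} {n : ℕ} {y : ℝ} (hy : 0 < y) {B : ℝ} (hB : ∀ j, |mld a 3 n j| ≤ B) :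
    |mlQ a n y - (mlgp (-a) n / y - mlgp (-(2 * a)) n / y ^ 2 + mlgp (-(3 * a)) n / y ^ 3)| ≤ B / y ^ 4 := by
  set v := (1 + y)⁻¹ with hv
  have hv1 : v * (1 + y) = 1 := by rw [hv]; field_simp
  have hv0 : 0 < v := by rw [hv]; positivity
  have hvl : v < 1 := by rw [hv]; exact inv_lt_one_of_one_lt₀ (by linarith)
  have hB0 : 0 ≤ B := (abs_nonneg _).trans (hB 0)
  have A0 := ml_abel (n := n) hv1 a 0
  have A1 := ml_abel (n := n) hv1 a 1
  have A2 := ml_abel (n := n) hv1 a 2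
  obtain ⟨q0, q1, q2⟩ := mlq_e012 a n
  have d0 : mld a 0 n 0 = mlgp (-a) n := by simp only [mld]; rw [q0]
  have d1 : mld a 1 n 0 = mlgp (-(2 * a)) n := by simp only [mld]; rw [q0, q1]; ring
  have d2 : mld a 2 n 0 = mlgp (-(3 * a)) n := by simp only [mld]; rw [q0, q1, q2]; ring
  rw [d0] at A0
  rw [d1] at A1
  rw [d2] at A2
  have hQ : mlQ a n y = ∑ j ∈ Finset.range (n + 1), mld a 0 n j * v ^ (j + 1) := by
    simp only [mlQ, mld, hv]
  rw [← hQ] at A0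
  set S3 := ∑ j ∈ Finset.range (n + 1), mld a (2 + 1) n j * v ^ (j + 1) with hS3
  have hS : |S3| ≤ B / y := by
    calc |S3| ≤ ∑ j ∈ Finset.range (n + 1), |mld a (2 + 1) n j * v ^ (j + 1)| := Finset.abs_sum_le_sum_abs _ _
      _ ≤ ∑ j ∈ Finset.range (n + 1), B * v * v ^ j := by
        refine Finset.sum_le_sum fun j _ => ?_
        rw [abs_mul, abs_of_pos (pow_pos hv0 _), mul_assoc, ← pow_succ']
        exact mul_le_mul_of_nonneg_right (hB j) (by positivity)
      _ = B * v * ∑ j ∈ Finset.range (n + 1), v ^ j := by rw [Finset.mul_sum]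
      _ ≤ B * v * (1 - v)⁻¹ := by
        refine mul_le_mul_of_nonneg_left ?_ (by positivity)
        rw [geom_sum_eq hvl.ne, ← neg_div_neg_eq, neg_sub, neg_sub, div_eq_mul_inv]
        have : 0 < (1 - v)⁻¹ := inv_pos.mpr (by linarith)
        have := pow_pos hv0 (n + 1)
        nlinarith
      _ = B / y := by
        have : 1 - v = v * y := by linarith
        rw [this]; field_simp
  have : mlQ a n y - (mlgp (-a) n / y - mlgp (-(2 * a)) n / y ^ 2 + mlgp (-(3 * a)) n / y ^ 3) = -(S3 / y ^ 3) := by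
    norm_num at A0 A1 A2
    revert A0 A1 A2
    generalize mlgp (-a) n = x1
    generalize mlgp (-(2 * a)) n = x2
    generalize mlgp (-(3 * a)) n = x3
    intro A2 A0 A1
    field_simp
    linear_combination y ^ 2 * A0 - y * A1 + A2
  rw [this, abs_neg, abs_div, abs_of_pos (pow_pos hy 3)]
  rw [show B / y ^ 4 = (B / y) / y ^ 3 by field_simp]
  gcongr

lemma ml_asym {a : ℝ} (h0 : 1 / 2 < a) (h1 : a < 1) : ∃ C : ℝ, ∀ t : ℝ, 0 < t →
    |mittagLeffler a 1 (-t) - (1 / Real.Gamma (1 - a) / t - 1 / Real.Gamma (1 - 2 * a) / t ^ 2 +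
      1 / Real.Gamma (1 - 3 * a) / t ^ 3)| ≤ C / t ^ 4 := by
  obtain ⟨C, hC, n0, hn0, hb⟩ := mld_bound h0 h1
  refine ⟨C, fun t ht => ?_⟩
  have t1 := mlgp_tendsto (-a)
  have t2 := mlgp_tendsto (-(2 * a))
  have t3 := mlgp_tendsto (-(3 * a))
  simp only [← sub_eq_add_neg, neg_neg] at t1 t2 t3
  have tQ := mlQ_tendsto (a := a) (by linarith) h1.le ht.le
  have tt := (tQ.sub (((t1.div_const t).sub (t2.div_const (t ^ 2))).add (t3.div_const (t ^ 3)))).abs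
  refine le_of_tendsto tt ?_
  filter_upwards [eventually_ge_atTop n0] with n hn
  have hn' : (0 : ℝ) < n := by exact_mod_cast (show 0 < n by omega)
  have hp : 0 < (n : ℝ) ^ a := Real.rpow_pos_of_pos hn' a
  have hy : 0 < t * (n : ℝ) ^ (-a) := by positivity
  have := mlQ_expand (a := a) (n := n) hy (hb n hn)
  have e1 : (n : ℝ) ^ (-a) = ((n : ℝ) ^ a)⁻¹ := Real.rpow_neg hn'.le a
  have e2 : (n : ℝ) ^ (2 * a) = ((n : ℝ) ^ a) ^ 2 := by
    rw [mul_comm, Real.rpow_mul hn'.le]; norm_cast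
  have e3 : (n : ℝ) ^ (3 * a) = ((n : ℝ) ^ a) ^ 3 := by
    rw [mul_comm, Real.rpow_mul hn'.le]; norm_cast
  have e4 : (n : ℝ) ^ (-(4 * a)) = (((n : ℝ) ^ a) ^ 4)⁻¹ := by
    rw [Real.rpow_neg hn'.le, mul_comm, Real.rpow_mul hn'.le]; norm_cast
  rw [e4] at this
  rw [e1] at this ⊢
  rw [e2, e3]
  refine le_of_eq_of_le ?_ (this.trans_eq ?_)
  · congr 1
    generalize mlgp (-a) n = x1
    generalize mlgp (-(2 * a)) n = x2
    generalize mlgp (-(3 * a)) n = x3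
    generalize mlQ a n _ = x4
    field_simp
  · field_simp

lemma ml_g_tendsto {a : ℝ} (h0 : 1 / 2 < a) (h1 : a < 1) :
    Tendsto (fun t : ℝ => t ^ 3 * mittagLeffler a 1 (-t) - 1 / Real.Gamma (1 - a) * t ^ 2 + 1 / Real.Gamma (1 - 2 * a) * t)
      atTop (𝓝 (1 / Real.Gamma (1 - 3 * a))) := by
  obtain ⟨C, hC⟩ := ml_asym h0 h1
  rw [tendsto_iff_dist_tendsto_zero]
  refine squeeze_zero' (g := fun t : ℝ => C / t) (Eventually.of_forall fun _ => dist_nonneg) ?_ (tendsto_id.const_div_atTop C)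
  filter_upwards [eventually_gt_atTop 0] with t ht
  have := hC t ht
  rw [Real.dist_eq]
  have e : t ^ 3 * mittagLeffler a 1 (-t) - 1 / Real.Gamma (1 - a) * t ^ 2 + 1 / Real.Gamma (1 - 2 * a) * t - 1 / Real.Gamma (1 - 3 * a)
    = t ^ 3 * (mittagLeffler a 1 (-t) - (1 / Real.Gamma (1 - a) / t - 1 / Real.Gamma (1 - 2 * a) / t ^ 2 +
      1 / Real.Gamma (1 - 3 * a) / t ^ 3)) := by
    generalize 1 / Real.Gamma (1 - a) = x1
    generalize 1 / Real.Gamma (1 - 2 * a) = x2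
    generalize 1 / Real.Gamma (1 - 3 * a) = x3
    field_simp
    ring
  rw [e, abs_mul, abs_of_pos (pow_pos ht 3)]
  calc t ^ 3 * _ ≤ t ^ 3 * (C / t ^ 4) := by gcongr
    _ = C / t := by field_simp

lemma ml_notRC {a : ℝ} (h0 : 1 / 2 < a) (h1 : a < 1)
    (hG : 1 / Real.Gamma (1 - 2 * a) ^ 2 < 1 / (Real.Gamma (1 - a) * Real.Gamma (1 - 3 * a))) :
    ¬ MlRC (fun t => mittagLeffler a 1 (-t)) := by
  intro hRC
  have g1 := ml_g_tendsto h0 h1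
  set a1 := 1 / Real.Gamma (1 - a) with ha1
  set a2 := 1 / Real.Gamma (1 - 2 * a) with ha2
  set a3 := 1 / Real.Gamma (1 - 3 * a) with ha3
  have hG' : a2 ^ 2 - a1 * a3 < 0 := by
    rw [ha1, ha2, ha3, one_div_mul_one_div, one_div_pow]; linarith
  set f : ℝ → ℝ := fun t => mittagLeffler a 1 (-t) with hf
  set g : ℝ → ℝ := fun t : ℝ => t ^ 3 * f t - a1 * t ^ 2 + a2 * t with hg
  have g1 : Tendsto g atTop (𝓝 a3) := g1
  have g2 : Tendsto (fun t => g (2 * t)) atTop (𝓝 a3) := g1.comp (tendsto_id.const_mul_atTop two_pos)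
  have g3 : Tendsto (fun t => g (3 * t)) atTop (𝓝 a3) := g1.comp (tendsto_id.const_mul_atTop three_pos)
  have hh : Tendsto (fun t : ℝ => t⁻¹) atTop (𝓝 0) := tendsto_inv_atTop_zero
  let Φ : ℝ × ℝ × ℝ × ℝ → ℝ := fun p =>
    (a1 / 2) * (p.2.1 + p.2.2.2 / 27) + (p.2.2.1 / 8) * (a1 + a1 / 3) - 2 * (a1 * (p.2.2.2 / 27) + p.2.1 * (a1 / 3))
     + (a2 / 4) * (a2 + a2 / 9) - 2 * a2 * (a2 / 9)
     + p.1 * (-(a2 / 4) * (p.2.1 + p.2.2.2 / 27) - (p.2.2.1 / 8) * (a2 + a2 / 9) + 2 * (a2 * (p.2.2.2 / 27) + p.2.1 * (a2 / 9)))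
     + p.1 ^ 2 * ((p.2.2.1 / 8) * (p.2.1 + p.2.2.2 / 27) - 2 * p.2.1 * (p.2.2.2 / 27))
  have hΦ : Continuous Φ := by fun_prop
  have hlim := (hΦ.tendsto (0, a3, a3, a3)).comp (hh.prodMk_nhds (g1.prodMk_nhds (g2.prodMk_nhds g3)))
  have hval : Φ (0, a3, a3, a3) < 0 := by
    have : Φ (0, a3, a3, a3) = (a2 ^ 2 - a1 * a3) / 18 := by simp only [Φ]; ring
    rw [this]; linarith
  have hneg := hlim.eventually (gt_mem_nhds hval)
  obtain ⟨T, hT, hT0⟩ := (hneg.and (eventually_gt_atTop (0 : ℝ))).exists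
  have hr := hRC T (3 * T) (1 / 2) hT0.le (by positivity) (by norm_num) (by norm_num)
  rw [show 1 / 2 * T + (1 - 1 / 2) * (3 * T) = 2 * T by ring] at hr
  have hid : Φ (T⁻¹, g T, g (2 * T), g (3 * T)) = T ^ 4 * (f (2 * T) * (f T + f (3 * T)) - 2 * f T * f (3 * T)) := by
    simp only [Φ, hg]
    field_simp
    ring
  have hT' : Φ (T⁻¹, g T, g (2 * T), g (3 * T)) < 0 := hT
  rw [hid] at hT'
  have : 0 ≤ T ^ 4 * (f (2 * T) * (f T + f (3 * T)) - 2 * f T * f (3 * T)) := mul_nonneg (by positivity) (by linarith)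
  linarith

noncomputable def mlR (s : ℝ) : ℝ := (Real.Gamma s)⁻¹

lemma mlR_cont : Continuous mlR := by
  have h : mlR = fun s : ℝ => ((Complex.Gamma (s : ℂ))⁻¹).re := by
    funext s
    rw [mlR, Complex.Gamma_ofReal, ← Complex.ofReal_inv, Complex.ofReal_re]
  rw [h]
  exact Complex.continuous_re.comp (Complex.differentiable_one_div_Gamma.continuous.comp Complex.continuous_ofReal)

lemma mlR_rec (s : ℝ) : mlR s = s * mlR (s + 1) := by
  unfold mlR
  rcases eq_or_ne s 0 with h | h
  · subst h; simp [Real.Gamma_zero]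
  · rw [Real.Gamma_add_one h, mul_inv, ← mul_assoc, mul_inv_cancel₀ h, one_mul]

noncomputable def mlG (a : ℝ) : ℝ := mlR (1 - 2 * a) ^ 2 - mlR (1 - a) * mlR (1 - 3 * a)

lemma mlG_eq (a : ℝ) : mlG a = 1 / Real.Gamma (1 - 2 * a) ^ 2 - 1 / (Real.Gamma (1 - a) * Real.Gamma (1 - 3 * a)) := by
  simp only [mlG, mlR, one_div, mul_inv, inv_pow]

lemma mlG_cont : Continuous mlG := by
  have := mlR_cont
  unfold mlG
  fun_prop

lemma mlG_half : 0 < mlG (1 / 2) := by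
  unfold mlG
  have h1 : mlR (1 - 2 * (1 / 2)) = 0 := by simp [mlR, Real.Gamma_zero]
  have h2 : mlR (1 - 3 * (1 / 2)) = -(1 / 2) * mlR (1 - 1 / 2) := by
    rw [mlR_rec]; norm_num
  rw [h1, h2]
  have : 0 < mlR (1 - 1 / 2) := inv_pos.mpr (Real.Gamma_pos_of_pos (by norm_num))
  nlinarith

lemma mlG_near_one {x : ℝ} (hx : x < 1) : ∃ b, x < b ∧ b < 1 ∧ mlG b < 0 := by
  let H : ℝ → ℝ := fun ε => 4 * (2 * ε - 1) ^ 2 * mlR (1 + 2 * ε) ^ 2 - 3 * (3 * ε - 2) * (3 * ε - 1) * (mlR (1 + ε) * mlR (1 + 3 * ε))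
  have hH : Continuous H := by
    have := mlR_cont
    fun_prop
  have h0 : H 0 < 0 := by
    simp only [H]
    have : mlR 1 = 1 := by simp [mlR]
    norm_num [this]
  have hG : ∀ ε, mlG (1 - ε) = ε ^ 2 * H ε := by
    intro ε
    simp only [mlG, H]
    rw [show 1 - 2 * (1 - ε) = -1 + 2 * ε by ring, show 1 - (1 - ε) = ε by ring, show 1 - 3 * (1 - ε) = -2 + 3 * ε by ring]
    rw [mlR_rec (-1 + 2 * ε), mlR_rec (-1 + 2 * ε + 1), mlR_rec ε, mlR_rec (-2 + 3 * ε), mlR_rec (-2 + 3 * ε + 1), mlR_rec (-2 + 3 * ε + 1 + 1)]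
    rw [show -1 + 2 * ε + 1 + 1 = 1 + 2 * ε by ring, show -2 + 3 * ε + 1 + 1 + 1 = 1 + 3 * ε by ring, add_comm ε 1]
    ring
  have hev : ∀ᶠ ε in 𝓝[>] (0 : ℝ), H ε < 0 := nhdsWithin_le_nhds (hH.continuousAt.eventually (gt_mem_nhds h0))
  have hev2 : ∀ᶠ ε in 𝓝[>] (0 : ℝ), ε < 1 - x := nhdsWithin_le_nhds (gt_mem_nhds (by linarith))
  obtain ⟨ε, ⟨h1, h2⟩, h3⟩ := ((hev.and hev2).and self_mem_nhdsWithin).exists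
  have h3' : 0 < ε := h3
  refine ⟨1 - ε, by linarith, by linarith, ?_⟩
  rw [hG]
  exact mul_neg_of_pos_of_neg (by positivity) h1

lemma mlG_zero {x y : ℝ} (hxy : x < y) (hx : 0 < mlG x) (hy : mlG y < 0) : ∃ z, x < z ∧ z < y ∧ mlG z = 0 := by
  obtain ⟨z, hz, hz0⟩ := intermediate_value_Ioo' hxy.le mlG_cont.continuousOn ⟨hy, hx⟩
  exact ⟨z, hz.1, hz.2, hz0⟩

lemma mlG_zero' {x y : ℝ} (hxy : x < y) (hx : mlG x < 0) (hy : 0 < mlG y) : ∃ z, x < z ∧ z < y ∧ mlG z = 0 := by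
  obtain ⟨z, hz, hz0⟩ := intermediate_value_Ioo hxy.le mlG_cont.continuousOn ⟨hx, hy⟩
  exact ⟨z, hz.1, hz.2, hz0⟩

lemma mlG_sign {αs : ℝ} (hs1 : αs < 1) (huniq : ∀ a ∈ Set.Ioo (0 : ℝ) 1, mlG a = 0 → a = αs) :
    1 / 2 < αs ∧ (∀ x, 1 / 2 < x → x < αs → 0 < mlG x) ∧ ∀ x, αs < x → x < 1 → mlG x < 0 := by
  have hhalf : 1 / 2 < αs := by
    obtain ⟨b, h1, h2, h3⟩ := mlG_near_one (x := 1 / 2) (by norm_num)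
    obtain ⟨z, z1, z2, z3⟩ := mlG_zero h1 mlG_half h3
    rw [← huniq z ⟨by linarith, by linarith⟩ z3]
    exact z1
  refine ⟨hhalf, fun x hx1 hx2 => ?_, fun x hx1 hx2 => ?_⟩
  · by_contra hn
    rcases (not_lt.mp hn).lt_or_eq with h | h
    · obtain ⟨z, z1, z2, z3⟩ := mlG_zero hx1 mlG_half h
      have := huniq z ⟨by linarith, by linarith⟩ z3
      linarith
    · have := huniq x ⟨by linarith, by linarith⟩ h
      linarith
  · by_contra hn
    rcases (not_lt.mp hn).lt_or_eq with h | h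
    · obtain ⟨b, h1, h2, h3⟩ := mlG_near_one hx2
      obtain ⟨z, z1, z2, z3⟩ := mlG_zero h1 h h3
      have := huniq z ⟨by linarith, by linarith⟩ z3
      linarith
    · have := huniq x ⟨by linarith, by linarith⟩ h.symm
      linarith

lemma mlRC_exp : MlRC (fun t => mittagLeffler 1 1 (-t)) := by
  have h : ∀ z : ℝ, mittagLeffler 1 1 z = Real.exp z := by
    intro z
    rw [mittagLeffler, Real.exp_eq_exp_ℝ, NormedSpace.exp_eq_tsum_div]
    refine tsum_congr fun n => ?_
    rw [one_mul, add_comm, Real.Gamma_nat_eq_factorial]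
  simp only [h]
  intro s t μ hs ht h0 h1
  have hc := (convexOn_exp.2 (Set.mem_univ s) (Set.mem_univ t) h0 (by linarith : 0 ≤ 1 - μ) (by ring))
  simp only [smul_eq_mul] at hc
  have e1 : Real.exp (-s) * Real.exp s = 1 := by rw [← Real.exp_add]; simp
  have e2 : Real.exp (-t) * Real.exp t = 1 := by rw [← Real.exp_add]; simp
  set τ := μ * s + (1 - μ) * t
  have e3 : Real.exp (-τ) * Real.exp τ = 1 := by rw [← Real.exp_add]; simp
  have e : μ * Real.exp (-t) + (1 - μ) * Real.exp (-s) = (μ * Real.exp s + (1 - μ) * Real.exp t) * (Real.exp (-s) * Real.exp (-t)) := by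
    linear_combination (-μ * Real.exp (-t)) * e1 + (-(1 - μ) * Real.exp (-s)) * e2
  simp only
  rw [e]
  have hp : 0 < Real.exp (-s) * Real.exp (-t) := by positivity
  calc Real.exp (-s) * Real.exp (-t) = Real.exp (-τ) * (Real.exp τ * (Real.exp (-s) * Real.exp (-t))) := by
        rw [← mul_assoc, e3, one_mul]
    _ ≤ _ := by gcongr

lemma mlRC_limit {αs : ℝ} (h0 : 1 / 2 < αs)
    (h : ∀ x, 1 / 2 < x → x < αs → MlRC (fun t => mittagLeffler x 1 (-t))) : MlRC (fun t => mittagLeffler αs 1 (-t)) := by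
  intro s t μ hs ht hm0 hm1
  have c : ∀ t, Tendsto (fun x => mittagLeffler x 1 t) (𝓝[<] αs) (𝓝 (mittagLeffler αs 1 t)) := fun t =>
    (ml_continuous_param (by linarith : 0 < αs) t).tendsto.mono_left nhdsWithin_le_nhds
  refine le_of_tendsto_of_tendsto ((c (-s)).mul (c (-t)))
    ((c (-(μ * s + (1 - μ) * t))).mul (((c (-t)).const_mul μ).add ((c (-s)).const_mul (1 - μ)))) ?_
  filter_upwards [nhdsWithin_le_nhds (lt_mem_nhds h0), self_mem_nhdsWithin] with x hx1 hx2
  exact h x hx1 hx2 s t μ hs ht hm0 hm1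

lemma mlRC_iff {α αs : ℝ} (h0 : 0 < α) (h1 : α ≤ 1) (hs1 : αs < 1) (huniq : ∀ a ∈ Set.Ioo (0 : ℝ) 1, mlG a = 0 → a = αs) :
    MlRC (fun t => mittagLeffler α 1 (-t)) ↔ (α ≤ αs ∨ α = 1) := by
  obtain ⟨hh, hp, hn⟩ := mlG_sign hs1 huniq
  have hlt : ∀ x, 1 / 2 < x → x < αs → MlRC (fun t => mittagLeffler x 1 (-t)) := by
    intro x hx1 hx2
    have := hp x hx1 hx2
    rw [mlG_eq] at this
    exact mlRC_of_G hx1 (by linarith) (by linarith)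
  constructor
  · intro h
    by_contra hc
    push Not at hc
    have ha1 : α < 1 := lt_of_le_of_ne h1 hc.2
    have := hn α hc.1 ha1
    rw [mlG_eq] at this
    exact ml_notRC (by linarith) ha1 (by linarith) h
  · rintro (h | h)
    · rcases le_or_gt α (1 / 2) with h2 | h2
      · exact mlRC_half h0 h2
      · rcases h.lt_or_eq with h3 | h3
        · exact hlt α h2 h3
        · rw [h3]; exact mlRC_limit hh hlt
    · rw [h]; exact mlRC_exp

lemma ml_concave_iff {f T : ℝ → ℝ} (hpos : ∀ t, 0 ≤ t → 0 < f t) (hle : ∀ t, 0 ≤ t → f t ≤ 1)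
    (hanti : ∀ s t, 0 ≤ s → s < t → f t < f s) (hT0 : ∀ x, 0 < x → x ≤ 1 → 0 ≤ T x)
    (hfT : ∀ x, 0 < x → x ≤ 1 → f (T x) = x) (hTf : ∀ t, 0 ≤ t → T (f t) = t) :
    ConcaveOn ℝ (Set.Ioc (0 : ℝ) 1) (fun x => x * T x) ↔ MlRC f := by
  constructor
  · intro hc s t μ hs ht hm0 hm1
    have hx := hpos s hs
    have hx1 := hle s hs
    have hy := hpos t ht
    have hy1 := hle t ht
    have hm2 : 0 ≤ 1 - μ := by linarith
    set x := f s with hxd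
    set y := f t with hyd
    have hd : 0 < μ * y + (1 - μ) * x := by
      rcases hm0.lt_or_eq with h | h
      · have := mul_pos h hy
        have := mul_nonneg hm2 hx.le
        linarith
      · rw [← h]; linarith
    set d := μ * y + (1 - μ) * x with hdd
    have hl : μ * y / d + (1 - μ) * x / d = 1 := by rw [← add_div, ← hdd, div_self hd.ne']
    have h := hc.2 (show x ∈ Set.Ioc (0 : ℝ) 1 from ⟨hx, hx1⟩) (show y ∈ Set.Ioc (0 : ℝ) 1 from ⟨hy, hy1⟩)
      (show 0 ≤ μ * y / d by positivity) (show 0 ≤ (1 - μ) * x / d by positivity) hl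
    simp only [smul_eq_mul] at h
    have hz : μ * y / d * x + (1 - μ) * x / d * y = x * y / d := by field_simp; ring
    rw [hz, hTf s hs, hTf t ht] at h
    have hzp : 0 < x * y / d := by positivity
    have hz1 : x * y / d ≤ 1 := by
      rw [← hz]
      calc μ * y / d * x + (1 - μ) * x / d * y ≤ μ * y / d * 1 + (1 - μ) * x / d * 1 := by gcongr
        _ = 1 := by rw [mul_one, mul_one, hl]
    have h2 : x * y / d * (μ * s + (1 - μ) * t) ≤ x * y / d * T (x * y / d) := by
      refine le_of_eq_of_le ?_ h
      field_simp
    have h3 : μ * s + (1 - μ) * t ≤ T (x * y / d) := le_of_mul_le_mul_left h2 hzp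
    have h4 : x * y / d ≤ f (μ * s + (1 - μ) * t) := by
      rw [← hfT _ hzp hz1]
      rcases h3.lt_or_eq with h5 | h5
      · rw [hfT _ hzp hz1] at *
        have := hanti _ _ (by positivity) h5
        rw [hfT _ hzp hz1] at this
        exact this.le
      · rw [h5, hfT _ hzp hz1]
    rwa [div_le_iff₀ hd] at h4
  · intro hRC
    refine ⟨convex_Ioc 0 1, ?_⟩
    intro x hx y hy a b ha hb hab
    simp only [smul_eq_mul]
    obtain ⟨hx0, hx1⟩ := hx
    obtain ⟨hy0, hy1⟩ := hy
    have hmem : a * x + b * y ∈ Set.Ioc (0 : ℝ) 1 := convex_Ioc 0 1 ⟨hx0, hx1⟩ ⟨hy0, hy1⟩ ha hb hab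
    obtain ⟨hz0, hz1⟩ := hmem
    set z := a * x + b * y with hz
    have hm : 1 - a * x / z = b * y / z := by rw [eq_div_iff hz0.ne']; field_simp; rw [hz]; ring
    have hmu0 : 0 ≤ a * x / z := by positivity
    have hmu1 : 0 ≤ b * y / z := by positivity
    have h := hRC (T x) (T y) (a * x / z) (hT0 x hx0 hx1) (hT0 y hy0 hy1) hmu0 (by linarith)
    rw [hm, hfT x hx0 hx1, hfT y hy0 hy1] at h
    set τ := a * x / z * T x + b * y / z * T y with hτ
    have hτ0 : 0 ≤ τ := by
      have := hT0 x hx0 hx1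
      have := hT0 y hy0 hy1
      positivity
    have e : a * x / z * y + b * y / z * x = x * y / z := by
      rw [eq_div_iff hz0.ne']; field_simp; linear_combination hab
    rw [e] at h
    have hxy : 0 < x * y := by positivity
    have h2 : z ≤ f τ := by
      rw [mul_div_assoc', le_div_iff₀ hz0] at h
      have : x * y * z ≤ x * y * f τ := by linarith
      exact le_of_mul_le_mul_left this hxy
    have h3 : τ ≤ T z := by
      by_contra hn
      have := hanti _ _ (hT0 z hz0 hz1) (not_le.mp hn)
      rw [hfT z hz0 hz1] at this
      linarith
    have h4 : z * τ ≤ z * T z := by gcongr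
    refine le_of_eq_of_le ?_ h4
    rw [hτ]
    field_simp

lemma ml_zero (a : ℝ) : mittagLeffler a 1 0 = 1 := by
  unfold mittagLeffler
  rw [tsum_eq_single 0]
  · simp
  · intro n hn; simp [hn]

lemma ml_gt_one {a z : ℝ} (ha : 0 < a) (hz : 0 < z) : 1 < mittagLeffler a 1 z := by
  have h := (ml_summable ha z).sum_le_tsum (Finset.range 2) (fun n _ => by
    have : 0 < Real.Gamma (1 + a * n) := Real.Gamma_pos_of_pos (by positivity)
    positivity)
  have hG : 0 < Real.Gamma (1 + a) := Real.Gamma_pos_of_pos (by positivity)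
  have hp : 0 < z / Real.Gamma (1 + a) := by positivity
  simp [Finset.sum_range_succ] at h
  unfold mittagLeffler
  linarith

lemma ml_nonneg {a t : ℝ} (h0 : 0 < a) (h1 : a ≤ 1) (ht : 0 ≤ t) : 0 ≤ mittagLeffler a 1 (-t) := by
  refine ge_of_tendsto' (mlQ_tendsto h0 h1 ht) fun n => ?_
  unfold mlQ
  refine Finset.sum_nonneg fun j _ => mul_nonneg (mlq_nonneg h0.le h1 n j) ?_
  positivity

lemma ml_anti {a s t : ℝ} (h0 : 0 < a) (h1 : a ≤ 1) (hs : 0 ≤ s) (hst : s ≤ t) :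
    mittagLeffler a 1 (-t) ≤ mittagLeffler a 1 (-s) := by
  refine le_of_tendsto_of_tendsto' (mlQ_tendsto h0 h1 (hs.trans hst)) (mlQ_tendsto h0 h1 hs) fun n => ?_
  unfold mlQ
  refine Finset.sum_le_sum fun j _ => mul_le_mul_of_nonneg_left ?_ (mlq_nonneg h0.le h1 n j)
  have ht : 0 ≤ t := hs.trans hst
  have : 0 ≤ (1 + t * (n : ℝ) ^ (-a))⁻¹ := by positivity
  gcongr

/-- Theorem C: let `α ∈ (0,1]` and let `L` be the inverse on `(0,1]` of the restriction
of `E_α` to `(-∞,0]`. Then `x ↦ -x·L(x)` is concave on `(0,1]` iff `α ≤ α_*` or `α = 1`,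
where `α_*` is the unique solution in `(0,1)` of `1/Γ(1-2a)² = 1/(Γ(1-a)Γ(1-3a))`. -/
theorem neg_mul_log_concave_iff (α : ℝ) (hα : α ∈ Set.Ioc (0 : ℝ) 1) (L : ℝ → ℝ)
    (hL1 : ∀ x ∈ Set.Ioc (0 : ℝ) 1, mittagLeffler α 1 (L x) = x)
    (hL2 : ∀ z : ℝ, z ≤ 0 → L (mittagLeffler α 1 z) = z)
    (αs : ℝ) (hαs : αs ∈ Set.Ioo (0 : ℝ) 1)
    (heq : 1 / Real.Gamma (1 - 2 * αs) ^ 2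
      = 1 / (Real.Gamma (1 - αs) * Real.Gamma (1 - 3 * αs)))
    (huniq : ∀ a ∈ Set.Ioo (0 : ℝ) 1,
      1 / Real.Gamma (1 - 2 * a) ^ 2
        = 1 / (Real.Gamma (1 - a) * Real.Gamma (1 - 3 * a)) → a = αs) :
    ConcaveOn ℝ (Set.Ioc (0 : ℝ) 1) (fun x => -(x * L x)) ↔ (α ≤ αs ∨ α = 1) := by
  obtain ⟨h0, h1⟩ := hα
  rw [← mlRC_iff h0 h1 hαs.2 (fun a ha hG => huniq a ha (by rw [mlG_eq] at hG; linarith))]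
  have hLn : ∀ x, 0 < x → x ≤ 1 → L x ≤ 0 := by
    intro x hx0 hx1
    by_contra hn
    have := ml_gt_one h0 (not_le.mp hn)
    rw [hL1 x ⟨hx0, hx1⟩] at this
    linarith
  have hanti : ∀ s t, 0 ≤ s → s < t → mittagLeffler α 1 (-t) < mittagLeffler α 1 (-s) := by
    intro s t hs hst
    refine lt_of_le_of_ne (ml_anti h0 h1 hs hst.le) fun he => ?_
    have e1 := hL2 (-t) (by linarith)
    have e2 := hL2 (-s) (by linarith)
    rw [he, e2] at e1
    linarith
  rw [← ml_concave_iff (f := fun t => mittagLeffler α 1 (-t)) (T := fun x => -L x)]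
  · simp only [mul_neg]
  · intro t ht
    exact lt_of_le_of_lt (ml_nonneg h0 h1 (by linarith : 0 ≤ t + 1)) (hanti t (t + 1) ht (by linarith))
  · intro t ht
    have := ml_anti h0 h1 le_rfl ht
    rwa [neg_zero, ml_zero] at this
  · exact hanti
  · intro x hx0 hx1
    have := hLn x hx0 hx1
    linarith
  · intro x hx0 hx1
    simp only [neg_neg]
    exact hL1 x ⟨hx0, hx1⟩
  · intro t ht
    rw [hL2 _ (by linarith), neg_neg]
end

section
/- Let α ∈ (0,1), let E_α(z) = ∑_{n=0}^∞ z^n / Γ(1 + αn), and let L : (0,∞) → ℝ satisfy E_α(L(x)) = x for all x ∈ (0,1] and L(E_α(z)) = z for all z ≤ 0. Then the following are equivalent: (i) x ↦ − x · L(x) is concave on (0,1); (ii) E_α(z) · E_α''(z) ≤ 2 · E_α'(z)² for all z ≤ 0; (iii) z ↦ 1 / E_α(z) is convex on (-∞, 0]. -/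
open Filter Topology MeasureTheory

namespace MLAux

noncomputable def ps (a : ℕ → ℝ) (z : ℝ) : ℝ := ∑' n : ℕ, a n * z ^ n

def Entire (a : ℕ → ℝ) : Prop := ∀ R : ℝ, 0 < R → Summable fun n => |a n| * R ^ n

def dc (a : ℕ → ℝ) (n : ℕ) : ℝ := (n + 1) * a (n + 1)

lemma natbound (n : ℕ) : (n : ℝ) ≤ 2 ^ n := by
  exact_mod_cast (Nat.lt_two_pow_self (n := n)).le

lemma entire_dc {a : ℕ → ℝ} (ha : Entire a) : Entire (dc a) := by
  intro R hR
  have h := (summable_nat_add_iff 1).2 (ha (2 * (R + 1)) (by positivity))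
  refine Summable.of_nonneg_of_le (fun n => by positivity) (fun n => ?_) h
  have h1 : R ^ n ≤ (R + 1) ^ (n + 1) :=
    (pow_le_pow_left₀ hR.le (by linarith) n).trans
      (pow_le_pow_right₀ (by linarith) (Nat.le_succ n))
  have h2 : ((n : ℝ) + 1) ≤ 2 ^ (n + 1) := by exact_mod_cast natbound (n + 1)
  have h3 : |dc a n| = ((n : ℝ) + 1) * |a (n + 1)| := by
    rw [dc, abs_mul, abs_of_nonneg (by positivity)]
  rw [h3, mul_pow]
  calc ((n : ℝ) + 1) * |a (n + 1)| * R ^ n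
      = |a (n + 1)| * (((n : ℝ) + 1) * R ^ n) := by ring
    _ ≤ _ := by gcongr

lemma entire_summable {a : ℕ → ℝ} (ha : Entire a) (z : ℝ) : Summable fun n => a n * z ^ n := by
  refine Summable.of_norm_bounded (ha (|z| + 1) (by positivity)) (fun n => ?_)
  rw [Real.norm_eq_abs, abs_mul, abs_pow]
  gcongr
  linarith

lemma hasDerivAt_ps {a : ℕ → ℝ} (ha : Entire a) (z : ℝ) :
    HasDerivAt (ps a) (ps (dc a) z) z := by
  have key : HasDerivAt (fun z => ∑' n : ℕ, a n * z ^ n)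
      (∑' n : ℕ, a n * (n * z ^ (n - 1))) z := by
    refine hasDerivAt_tsum_of_isPreconnected (t := Metric.ball 0 (|z| + 1))
      (u := fun n => |a n| * (2 * (|z| + 1)) ^ n) (y₀ := z)
      (ha _ (by positivity)) Metric.isOpen_ball (convex_ball _ _).isPreconnected
      (fun n y _ => (hasDerivAt_pow n y).const_mul (a n)) ?_ ?_ (entire_summable ha z) ?_
    · intro n y hy
      have hy' : |y| ≤ |z| + 1 := by
        have := mem_ball_zero_iff.1 hy
        rw [Real.norm_eq_abs] at this
        exact this.le
      rw [Real.norm_eq_abs, abs_mul, abs_mul, abs_pow, Nat.abs_cast, mul_pow]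
      have h1 : |y| ^ (n - 1) ≤ (|z| + 1) ^ n :=
        (pow_le_pow_left₀ (abs_nonneg _) hy' _).trans
          (pow_le_pow_right₀ (by linarith [abs_nonneg z]) (Nat.sub_le n 1))
      have h2 := natbound n
      gcongr
    · simp
    · simp
  convert! key using 1
  have hs : Summable fun n : ℕ => a n * (n * z ^ (n - 1)) := by
    rw [← summable_nat_add_iff 1]
    refine (entire_summable (entire_dc ha) z).congr (fun n => ?_)
    simp [dc]; ring
  rw [hs.tsum_eq_zero_add, ps]
  simp only [Nat.cast_zero, zero_mul, mul_zero, zero_add]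
  refine tsum_congr (fun n => ?_)
  simp [dc]; ring

lemma gamma_ratio {α x : ℝ} (h0 : 0 < α) (h1 : α < 1) (hx : α ≤ x) :
    Real.Gamma x / Real.Gamma (x + α) ≤ 2 * x ^ (-α) := by
  have hx0 : 0 < x := h0.trans_le hx
  have hc := Real.Gamma_mul_add_mul_le_rpow_Gamma_mul_rpow_Gamma (s := x + α) (t := x + α + 1)
    (a := α) (b := 1 - α) (by linarith) (by linarith) h0 (by linarith) (by ring)
  have e : α * (x + α) + (1 - α) * (x + α + 1) = x + 1 := by ring
  have hg := Real.Gamma_pos_of_pos (show 0 < x + α by linarith)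
  rw [e, Real.Gamma_add_one hx0.ne', Real.Gamma_add_one (by linarith),
    Real.mul_rpow (by linarith) hg.le, mul_left_comm, ← Real.rpow_add hg,
    show α + (1 - α) = 1 by ring, Real.rpow_one] at hc
  have h2 : (x + α) ^ (1 - α) ≤ 2 * x ^ (1 - α) := by
    calc (x + α) ^ (1 - α) ≤ (2 * x) ^ (1 - α) :=
          Real.rpow_le_rpow (by linarith) (by linarith) (by linarith)
      _ = 2 ^ (1 - α) * x ^ (1 - α) := Real.mul_rpow (by norm_num) hx0.le
      _ ≤ 2 * x ^ (1 - α) := by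
          gcongr
          calc (2 : ℝ) ^ (1 - α) ≤ 2 ^ (1 : ℝ) :=
                Real.rpow_le_rpow_of_exponent_le (by norm_num) (by linarith)
            _ = 2 := Real.rpow_one 2
  have h3 : x ^ (1 - α) = x * x ^ (-α) := by
    rw [sub_eq_add_neg, Real.rpow_add hx0, Real.rpow_one]
  rw [div_le_iff₀ hg]
  have : x * Real.Gamma x ≤ x * (2 * x ^ (-α) * Real.Gamma (x + α)) := by
    calc _ ≤ _ := hc
      _ ≤ (2 * x ^ (1 - α)) * Real.Gamma (x + α) := by gcongr
      _ = _ := by rw [h3]; ring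
  exact le_of_mul_le_mul_left this hx0

lemma entire_ml {α β : ℝ} (h0 : 0 < α) (h1 : α < 1) (hβ : 0 < β) :
    Entire fun n : ℕ => 1 / Real.Gamma (β + α * n) := by
  intro R hR
  have hpos : ∀ n : ℕ, 0 < Real.Gamma (β + α * n) := fun n =>
    Real.Gamma_pos_of_pos (by positivity)
  have hx : Tendsto (fun n : ℕ => β + α * (n : ℝ)) atTop atTop :=
    tendsto_atTop_add_const_left _ _ (tendsto_natCast_atTop_atTop.const_mul_atTop h0)
  refine summable_of_ratio_test_tendsto_lt_one (l := 0) one_pos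
    (Eventually.of_forall fun n => ?_) ?_
  · have := hpos n
    positivity
  · have hlim : Tendsto (fun n : ℕ => R * (2 * (β + α * (n : ℝ)) ^ (-α))) atTop (𝓝 0) := by
      have := (((tendsto_rpow_neg_atTop h0).comp hx).const_mul 2).const_mul R
      simpa using this
    refine squeeze_zero' (Eventually.of_forall fun n => by positivity) ?_ hlim
    filter_upwards [hx.eventually_ge_atTop α] with n hn
    have hr := gamma_ratio h0 h1 hn
    have p1 := hpos n
    have p2 := hpos (n + 1)
    have e : β + α * ((n + 1 : ℕ) : ℝ) = β + α * n + α := by push_cast; ring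
    rw [e] at p2 ⊢
    rw [Real.norm_of_nonneg (by positivity), Real.norm_of_nonneg (by positivity),
      abs_of_pos (by positivity), abs_of_pos (by positivity)]
    calc _ = R * (Real.Gamma (β + α * n) / Real.Gamma (β + α * n + α)) := by
          rw [pow_succ]; field_simp
      _ ≤ _ := by gcongr

lemma ml_eq (α β : ℝ) : mittagLeffler α β = ps fun n : ℕ => 1 / Real.Gamma (β + α * n) := by
  funext z
  exact tsum_congr fun n => by ring

lemma deriv_ml {α : ℝ} (h0 : 0 < α) (h1 : α < 1) (z : ℝ) :
    deriv (mittagLeffler α 1) z = (1 / α) * mittagLeffler α α z := by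
  rw [ml_eq, ml_eq, (hasDerivAt_ps (entire_ml h0 h1 one_pos) z).deriv, ps, ps, ← tsum_mul_left]
  refine tsum_congr fun n => ?_
  have hp : 0 < α + α * n := by positivity
  have e : (1 : ℝ) + α * ((n + 1 : ℕ) : ℝ) = (α + α * n) + 1 := by push_cast; ring
  have := Real.Gamma_pos_of_pos hp
  simp only [dc]
  rw [e, Real.Gamma_add_one hp.ne', show α + α * (n:ℝ) = α * (n + 1) by ring] at *
  field_simp

lemma beta_int {a b : ℝ} (ha : 0 < a) (hb : 0 < b) :
    IntegrableOn (fun x : ℝ => x ^ (a - 1) * (1 - x) ^ (b - 1)) (Set.Ioo 0 1) ∧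
    ∫ x in Set.Ioo (0 : ℝ) 1, x ^ (a - 1) * (1 - x) ^ (b - 1) =
      Real.Gamma a * Real.Gamma b / Real.Gamma (a + b) := by
  have hc := Complex.betaIntegral_convergent (u := a) (v := b) (by simpa) (by simpa)
  rw [intervalIntegrable_iff_integrableOn_Ioo_of_le (by simp)] at hc
  have hcongr : Set.EqOn (fun x : ℝ => RCLike.re
      ((x : ℂ) ^ ((a : ℂ) - 1) * (1 - (x : ℂ)) ^ ((b : ℂ) - 1)))
      (fun x : ℝ => x ^ (a - 1) * (1 - x) ^ (b - 1)) (Set.Ioo 0 1) := by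
    intro x ⟨hx1, hx2⟩
    simp only
    norm_cast
    rw [← Complex.ofReal_cpow, ← Complex.ofReal_cpow, RCLike.re_to_complex,
      Complex.re_mul_ofReal, Complex.ofReal_re]
    all_goals linarith
  refine ⟨IntegrableOn.congr_fun hc.re hcongr measurableSet_Ioo, ?_⟩
  have := ProbabilityTheory.beta_eq_betaIntegralReal a b ha hb
  rw [ProbabilityTheory.beta] at this
  rw [this, Complex.betaIntegral, intervalIntegral.integral_of_le (by norm_num),
    integral_Ioc_eq_integral_Ioo, ← RCLike.re_to_complex, ← integral_re hc]
  exact (setIntegral_congr_fun measurableSet_Ioo hcongr).symm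

lemma ml_nonneg {α : ℝ} (h0 : 0 < α) (h1 : α < 1)
    (hd : ∀ z ≤ 0, 0 ≤ deriv (mittagLeffler α 1) z) (z : ℝ) (hz : z ≤ 0) :
    0 ≤ mittagLeffler α 1 z := by
  have hgp : ∀ m : ℕ, 0 < Real.Gamma (α + α * m) := fun m =>
    Real.Gamma_pos_of_pos (by positivity)
  have hg1 : 0 < Real.Gamma (1 - α) := Real.Gamma_pos_of_pos (by linarith)
  let F : ℕ → ℝ → ℝ := fun m r =>
    (r ^ ((α + α * m) - 1) * (1 - r) ^ ((1 - α) - 1)) * (z ^ m / Real.Gamma (α + α * m))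
  have hb := fun m : ℕ => beta_int (a := α + α * m) (b := 1 - α) (by positivity) (by linarith)
  have hval : ∀ m : ℕ, ∀ w : ℝ, (∫ r in Set.Ioo (0 : ℝ) 1,
      (r ^ ((α + α * m) - 1) * (1 - r) ^ ((1 - α) - 1)) * (w ^ m / Real.Gamma (α + α * m)))
      = Real.Gamma (1 - α) * (1 / Real.Gamma (1 + α * m) * w ^ m) := by
    intro m w
    rw [integral_mul_const, (hb m).2, show α + α * (m : ℝ) + (1 - α) = 1 + α * m by ring]
    have := hgp m
    have : 0 < Real.Gamma (1 + α * m) := Real.Gamma_pos_of_pos (by positivity)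
    field_simp
  have hsum : HasSum (fun m => ∫ r in Set.Ioo (0 : ℝ) 1, F m r)
      (∫ r in Set.Ioo (0 : ℝ) 1, ∑' m, F m r) := by
    refine hasSum_integral_of_summable_integral_norm (fun m => (hb m).1.mul_const _) ?_
    have : ∀ m : ℕ, (∫ r in Set.Ioo (0 : ℝ) 1, ‖F m r‖)
        = Real.Gamma (1 - α) * (1 / Real.Gamma (1 + α * m) * |z| ^ m) := by
      intro m
      rw [← hval]
      refine setIntegral_congr_fun measurableSet_Ioo fun r hr => ?_
      have a1 : 0 < 1 - r := by linarith [hr.2]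
      have a2 := hr.1
      simp only [F]
      rw [norm_mul, Real.norm_of_nonneg (by positivity), norm_div, norm_pow,
        Real.norm_of_nonneg (hgp m).le, Real.norm_eq_abs]
    simp_rw [this]
    exact (entire_summable (entire_ml h0 h1 one_pos) |z|).mul_left _
  have h2 : Real.Gamma (1 - α) * mittagLeffler α 1 z = ∫ r in Set.Ioo (0 : ℝ) 1, ∑' m, F m r := by
    rw [← hsum.tsum_eq, ml_eq, ps, ← tsum_mul_left]
    exact tsum_congr fun m => (hval m z).symm
  have h3 : 0 ≤ ∫ r in Set.Ioo (0 : ℝ) 1, ∑' m, F m r := by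
    refine setIntegral_nonneg measurableSet_Ioo fun r hr => ?_
    have a1 : 0 < 1 - r := by linarith [hr.2]
    have a2 := hr.1
    have e : ∑' m, F m r = r ^ (α - 1) * (1 - r) ^ ((1 - α) - 1) *
        mittagLeffler α α (z * r ^ α) := by
      rw [mittagLeffler, ← tsum_mul_left]
      refine tsum_congr fun m => ?_
      simp only [F]
      rw [mul_pow, ← Real.rpow_mul_natCast a2.le, show α + α * (m : ℝ) - 1 = (α - 1) + α * m by ring,
        Real.rpow_add a2]
      ring
    rw [e]
    have hd' := hd (z * r ^ α) (mul_nonpos_of_nonpos_of_nonneg hz (by positivity))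
    rw [deriv_ml h0 h1] at hd'
    have : 0 ≤ mittagLeffler α α (z * r ^ α) := by
      by_contra hneg
      push Not at hneg
      have : (1 / α) * mittagLeffler α α (z * r ^ α) < 0 :=
        mul_neg_of_pos_of_neg (by positivity) hneg
      linarith
    positivity
  rw [← h2] at h3
  exact nonneg_of_mul_nonneg_right h3 hg1


lemma strict_mono {α : ℝ} (L : ℝ → ℝ)
    (hE0 : mittagLeffler α 1 0 = 1) (hc : Continuous (mittagLeffler α 1))
    (hneg : ∀ x ∈ Set.Ioo (0 : ℝ) 1, L x < 0)
    (hL1 : ∀ x ∈ Set.Ioc (0 : ℝ) 1, mittagLeffler α 1 (L x) = x)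
    (hL2 : ∀ z : ℝ, z ≤ 0 → L (mittagLeffler α 1 z) = z) :
    StrictMonoOn (mittagLeffler α 1) (Set.Iic 0) := by
  intro u hu v hv huv
  have hcneg := hneg (1 / 2) (by norm_num)
  have hcval := hL1 (1 / 2) (by norm_num)
  have hinj : Set.InjOn (mittagLeffler α 1) (Set.Icc (min u (L (1 / 2))) 0) := by
    intro x hx y hy hxy
    rw [← hL2 x hx.2, ← hL2 y hy.2, hxy]
  have hM : min u (L (1 / 2)) ≤ 0 := (min_le_left _ _).trans hu
  rcases hc.continuousOn.strictMonoOn_of_injOn_Icc' hM hinj with h | h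
  · exact h ⟨min_le_left _ _, hu⟩ ⟨(min_le_left _ _).trans huv.le, hv⟩ huv
  · have := h ⟨min_le_right _ _, hcneg.le⟩ ⟨hM, le_rfl⟩ hcneg
    rw [hcval, hE0] at this
    norm_num at this

lemma convex_iff {E E1 E2 : ℝ → ℝ} (d0 : ∀ z, HasDerivAt E (E1 z) z)
    (d1 : ∀ z, HasDerivAt E1 (E2 z) z) (c2 : Continuous E2) (hp : ∀ z, 0 < E z) :
    (ConvexOn ℝ (Set.Iio 0) (fun z => 1 / E z) → ∀ z ≤ 0, E z * E2 z ≤ 2 * E1 z ^ 2) ∧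
    ((∀ z ≤ 0, E z * E2 z ≤ 2 * E1 z ^ 2) → ConvexOn ℝ (Set.Iic 0) (fun z => 1 / E z)) := by
  have f1 : ∀ z, HasDerivAt (fun z => 1 / E z) (-E1 z / E z ^ 2) z := by
    intro z
    simpa only [one_div] using! (d0 z).fun_inv (hp z).ne'
  have f1' : deriv (fun z => 1 / E z) = fun z => -E1 z / E z ^ 2 := funext fun z => (f1 z).deriv
  have f2 : ∀ z, HasDerivAt (fun z => -E1 z / E z ^ 2)
      ((2 * E1 z ^ 2 - E z * E2 z) / E z ^ 3) z := by
    intro z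
    have hz := hp z
    convert! (d1 z).fun_neg.fun_div ((d0 z).fun_pow 2) (by positivity) using 1
    field_simp
    push_cast
    ring
  have c0 : Continuous E := continuous_iff_continuousAt.2 fun z => (d0 z).continuousAt
  have c1 : Continuous E1 := continuous_iff_continuousAt.2 fun z => (d1 z).continuousAt
  constructor
  · intro h z hz
    have hlt : ∀ z ∈ Set.Iio (0 : ℝ), E z * E2 z ≤ 2 * E1 z ^ 2 := by
      intro z hz
      have hm := h.monotoneOn_deriv fun x _ => (f1 x).differentiableAt
      have hd := hm.derivWithin_nonneg (x := z)
      rw [f1', (f2 z).hasDerivWithinAt.derivWithin (isOpen_Iio.uniqueDiffWithinAt hz)] at hd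
      have := hp z
      have h3 : 0 < E z ^ 3 := by positivity
      by_contra hlt
      push Not at hlt
      have := div_neg_of_neg_of_pos (show 2 * E1 z ^ 2 - E z * E2 z < 0 by linarith) h3
      linarith
    have hcl : closure (Set.Iio (0 : ℝ)) ⊆ {z | E z * E2 z ≤ 2 * E1 z ^ 2} :=
      closure_minimal hlt (isClosed_le (c0.mul c2) (by fun_prop))
    rw [closure_Iio] at hcl
    exact hcl hz
  · intro h
    refine convexOn_of_deriv2_nonneg' (convex_Iic 0)
      (fun x _ => (f1 x).differentiableAt.differentiableWithinAt) ?_ ?_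
    · rw [f1']
      exact fun x _ => (f2 x).differentiableAt.differentiableWithinAt
    · intro x hx
      have := hp x
      simp only [Function.iterate_succ, Function.iterate_zero, Function.comp, id]
      rw [f1', (f2 x).deriv]
      exact div_nonneg (by linarith [h x hx]) (by positivity)

end MLAux

/-- For `α ∈ (0,1)` and `L` the inverse of `E_α|_{(-∞,0]}`, the following are equivalent:
(i) `x ↦ -x·L(x)` is concave on `(0,1)`;
(ii) `E_α(z)·E_α''(z) ≤ 2·E_α'(z)²` for all `z ≤ 0`;
(iii) `z ↦ 1/E_α(z)` is convex on `(-∞,0]`. -/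
theorem concave_iff_deriv_ineq_iff_reciprocal_convex (α : ℝ)
    (hα : α ∈ Set.Ioo (0 : ℝ) 1) (L : ℝ → ℝ)
    (hL1 : ∀ x ∈ Set.Ioc (0 : ℝ) 1, mittagLeffler α 1 (L x) = x)
    (hL2 : ∀ z : ℝ, z ≤ 0 → L (mittagLeffler α 1 z) = z) :
    (ConcaveOn ℝ (Set.Ioo (0 : ℝ) 1) (fun x => -(x * L x)) ↔
      ∀ z : ℝ, z ≤ 0 →
        mittagLeffler α 1 z * deriv (deriv (mittagLeffler α 1)) z ≤
          2 * (deriv (mittagLeffler α 1) z) ^ 2) ∧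
    ((∀ z : ℝ, z ≤ 0 →
        mittagLeffler α 1 z * deriv (deriv (mittagLeffler α 1)) z ≤
          2 * (deriv (mittagLeffler α 1) z) ^ 2) ↔
      ConvexOn ℝ (Set.Iic (0 : ℝ)) (fun z => 1 / mittagLeffler α 1 z)) := by
  obtain ⟨h0, h1⟩ := hα
  have en := MLAux.entire_ml h0 h1 one_pos
  have en1 := MLAux.entire_dc en
  have en2 := MLAux.entire_dc en1
  have d0 := MLAux.hasDerivAt_ps en
  have d1 := MLAux.hasDerivAt_ps en1
  have d2 := MLAux.hasDerivAt_ps en2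
  rw [← MLAux.ml_eq] at d0
  have e1 : deriv (mittagLeffler α 1) = _ := funext fun z => (d0 z).deriv
  have e2 : deriv (deriv (mittagLeffler α 1)) = MLAux.ps (MLAux.dc (MLAux.dc
      fun n : ℕ => 1 / Real.Gamma (1 + α * n))) := by
    rw [e1]; exact funext fun z => (d1 z).deriv
  have hc : Continuous (mittagLeffler α 1) :=
    continuous_iff_continuousAt.2 fun z => (d0 z).continuousAt
  have hE0 : mittagLeffler α 1 0 = 1 := by
    rw [mittagLeffler, tsum_eq_single 0]
    · simp
    · intro n hn
      simp [hn]
  have hEpos : ∀ z, 0 ≤ z → 1 ≤ mittagLeffler α 1 z := by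
    intro z hz
    have hs := MLAux.entire_summable en z
    have := hs.le_tsum 0 (fun n _ => by
      have : 0 < Real.Gamma (1 + α * n) := Real.Gamma_pos_of_pos (by positivity)
      positivity)
    rw [MLAux.ml_eq, MLAux.ps]
    simpa using this
  have hneg : ∀ x ∈ Set.Ioo (0 : ℝ) 1, L x < 0 := by
    intro x hx
    by_contra h
    have h2 := hEpos (L x) (not_lt.1 h)
    rw [hL1 x ⟨hx.1, hx.2.le⟩] at h2
    linarith [hx.2]
  have hmono := MLAux.strict_mono L hE0 hc hneg hL1 hL2
  have hd : ∀ z ≤ 0, 0 ≤ deriv (mittagLeffler α 1) z := by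
    intro z hz
    have := hmono.monotoneOn.derivWithin_nonneg (x := z)
    rwa [(d0 z).hasDerivWithinAt.derivWithin (uniqueDiffOn_Iic 0 z hz), ← (d0 z).deriv] at this
  have hp : ∀ z, 0 < mittagLeffler α 1 z := by
    intro z
    rcases le_or_gt z 0 with hz | hz
    · have a1 := MLAux.ml_nonneg h0 h1 hd (z - 1) (by linarith)
      have a2 := hmono (show z - 1 ∈ Set.Iic 0 by simp; linarith) hz (by linarith)
      linarith
    · linarith [hEpos z hz.le]
  have key := MLAux.convex_iff d0 d1
    (continuous_iff_continuousAt.2 fun z => (d2 z).continuousAt) hp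
  rw [e2, e1]
  refine ⟨⟨fun h => key.1 ⟨convex_Iio 0, ?_⟩, fun h => ⟨convex_Ioo 0 1, ?_⟩⟩, key.2,
    fun h => key.1 (h.subset Set.Iio_subset_Iic_self (convex_Iio 0))⟩
  · intro u hu v hv p q hp0 hq0 hpq
    have hu' : u < 0 := hu
    have hv' : v < 0 := hv
    have hxu := hp u
    have hyv := hp v
    have hxu1 := hmono hu'.le (Set.mem_Iic.2 le_rfl) hu'
    have hyv1 := hmono hv'.le (Set.mem_Iic.2 le_rfl) hv'
    rw [hE0] at hxu1 hyv1
    have hLx := hL2 u hu'.le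
    have hLy := hL2 v hv'.le
    simp only [smul_eq_mul]
    set x := mittagLeffler α 1 u
    set y := mittagLeffler α 1 v
    have hw : p * u + q * v ≤ 0 := by nlinarith
    have hT : 0 < p * (1 / x) + q * (1 / y) := by
      have : 1 ≤ 1 / x := by rw [le_div_iff₀ hxu]; linarith
      have : 1 ≤ 1 / y := by rw [le_div_iff₀ hyv]; linarith
      nlinarith
    set T := p * (1 / x) + q * (1 / y) with hTdef
    have ha : 0 ≤ p / (x * T) := by positivity
    have hb : 0 ≤ q / (y * T) := by positivity
    have hab : p / (x * T) + q / (y * T) = 1 := by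
      have : p / (x * T) + q / (y * T) = T / T := by
        rw [hTdef, add_div]; field_simp
      rw [this, div_self hT.ne']
    have hcv := h.2 ⟨hxu, hxu1⟩ ⟨hyv, hyv1⟩ ha hb hab
    have hmem := (convex_Ioo (0 : ℝ) 1) ⟨hxu, hxu1⟩ ⟨hyv, hyv1⟩ ha hb hab
    simp only [smul_eq_mul] at hcv hmem
    have es : p / (x * T) * x + q / (y * T) * y = 1 / T := by
      calc _ = (p + q) / T := by field_simp
        _ = 1 / T := by rw [hpq]
    rw [es, hLx, hLy] at hcv
    rw [es] at hmem
    have e3 : p / (x * T) * -(x * u) + q / (y * T) * -(y * v) = -(1 / T * (p * u + q * v)) := by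
      field_simp
      ring
    rw [e3] at hcv
    have hle : L (1 / T) ≤ p * u + q * v :=
      le_of_mul_le_mul_left (by linarith) (show 0 < 1 / T by positivity)
    have := hmono.monotoneOn (hneg _ hmem).le hw hle
    rw [hL1 _ ⟨hmem.1, hmem.2.le⟩] at this
    rw [div_le_iff₀ (hp _)]
    rw [div_le_iff₀ hT] at this
    linarith
  · have hcx := (key.2 h).2
    intro x hx y hy a b ha hb hab
    have hs := (convex_Ioo (0 : ℝ) 1) hx hy ha hb hab
    simp only [smul_eq_mul] at hs ⊢
    set s := a * x + b * y with hsdef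
    have hx0 := hx.1
    have hy0 := hy.1
    have hs0 := hs.1
    have hlm : a * x / s + b * y / s = 1 := by
      rw [← add_div, ← hsdef, div_self hs0.ne']
    have hl : 0 ≤ a * x / s := by positivity
    have hm : 0 ≤ b * y / s := by positivity
    have hcv := hcx (hneg x hx).le (hneg y hy).le hl hm hlm
    have hw := (convex_Iic (0 : ℝ)) (hneg x hx).le (hneg y hy).le hl hm hlm
    simp only [smul_eq_mul] at hcv hw
    rw [hL1 x ⟨hx.1, hx.2.le⟩, hL1 y ⟨hy.1, hy.2.le⟩] at hcv
    have e3 : a * x / s * (1 / x) + b * y / s * (1 / y) = 1 / s := by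
      calc _ = (a + b) / s := by field_simp
        _ = 1 / s := by rw [hab]
    rw [e3] at hcv
    have hle := (one_div_le_one_div (hp _) hs0).1 hcv
    have hLs : L s ≤ a * x / s * L x + b * y / s * L y := by
      by_contra hlt
      push Not at hlt
      have := hmono hw (hneg s hs).le hlt
      rw [hL1 s ⟨hs.1, hs.2.le⟩] at this
      linarith
    have h4 := mul_le_mul_of_nonneg_left hLs hs0.le
    have e4 : s * (a * x / s * L x + b * y / s * L y) = a * (x * L x) + b * (y * L y) := by
      field_simp
    linarith
end
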